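/- arXiv:1602.04884 — 3 statements merged into one kernel-verified Lean document; each statement's English description precedes it below -/
import Mathlib

section
/- Let 1 ≤ p < ∞, 0 < r < ∞, 0 < q < ∞ and set 1/s := (1/r − 1/p)₊. Let u, v, w ∈ 𝔐⁺ be weights with 0 < ∫ₜ^∞ u < ∞ for all t > 0, and let k satisfy Oinarov's condition with constant D. Define (𝒮f)(x) := (∫₀ˣ w(y)(∫₀ʸ k(y,z)f(z)dz)^q dy)^{1/q}, and for 0 ≤ c < d < ∞ the operators (ℋ*_{c,d}f)(x) := χ_{(c,d]}(x)∫_{ζ^{-1}(c)}^x k(x,z)f(z)dz and (ℋ*_d f)(x) := χ_{(0,d]}(x)∫₀ˣ k(x,z)f(z)dz. Then the least constant C_𝒮 such that ‖𝒮f‖_{L^r_u} ≤ C_𝒮‖f‖_{L^p_v} for all f ∈ 𝔐⁺ is finite if and only if 𝐀₀ + 𝐀₁ + 𝐀₂ < ∞, where 𝐀₀ and 𝐀₁ are the least constants in (∫₀^∞ u(x)(∫_{ζ^{-2}(x)}^x w)^{r/q}(∫₀^{ζ^{-2}(x)} k(ζ^{-2}(x),z)f(z)dz)^r dx)^{1/r}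 ≤ 𝐀₀‖f‖_{L^p_v} and (∫₀^∞ u(x)(∫_{ζ^{-2}(x)}^x w(y)k(y,ζ^{-2}(x))^q dy)^{r/q}(∫₀^{ζ^{-2}(x)} f)^r dx)^{1/r} ≤ 𝐀₁‖f‖_{L^p_v} over all f ∈ 𝔐⁺, and 𝐀₂ := sup_{t>0}(∫ₜ^∞ u)^{1/r}‖ℋ*_t‖_{L^p_v→L^q_w} if p ≤ r, while 𝐀₂ := (∫₀^∞ u(x)(∫ₓ^∞ u)^{s/p}‖ℋ*_{ζ^{-1}(x),ζ(x)}‖^s_{L^p_v→L^q_w} dx)^{1/s} if r < p. Moreover C_𝒮 ≈ 𝐀₀ + 𝐀₁ + 𝐀₂, with equivalence constants depending only on p, q, r and D. -/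
open MeasureTheory Set ENNReal

noncomputable section

/-- `∫₀ᵃ f` (Lebesgue integral over `(0,a)`). -/
def intTo (a : ℝ) (f : ℝ → ℝ≥0∞) : ℝ≥0∞ := ∫⁻ t in Ioo (0:ℝ) a, f t

/-- `∫ₐ^∞ f`. -/
def intFrom (a : ℝ) (f : ℝ → ℝ≥0∞) : ℝ≥0∞ := ∫⁻ t in Ioi a, f t

/-- `∫_c^d f`. -/
def intIoo (c d : ℝ) (f : ℝ → ℝ≥0∞) : ℝ≥0∞ := ∫⁻ t in Ioo c d, f t

/-- `∫_c^d f` with a possibly infinite upper endpoint `d`. -/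
def intIooE (c : ℝ) (d : ℝ≥0∞) (f : ℝ → ℝ≥0∞) : ℝ≥0∞ :=
  ∫⁻ t in {z : ℝ | c < z ∧ ENNReal.ofReal z < d}, f t

/-- `∫_d^∞ f` with a possibly infinite lower endpoint `d`. -/
def intFromE (d : ℝ≥0∞) (f : ℝ → ℝ≥0∞) : ℝ≥0∞ :=
  ∫⁻ t in {z : ℝ | d < ENNReal.ofReal z}, f t

/-- Weighted `L^p` quasinorm on `(0,∞)`, for `0 < p < ∞`. -/
def lpN (p : ℝ) (v f : ℝ → ℝ≥0∞) : ℝ≥0∞ :=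
  (∫⁻ x in Ioi (0:ℝ), f x ^ p * v x) ^ (1/p)

/-- Weighted `L^∞` norm on `(0,∞)`. -/
def linfN (v f : ℝ → ℝ≥0∞) : ℝ≥0∞ :=
  essSup (fun x => v x * f x) (volume.restrict (Ioi (0:ℝ)))

/-- Weighted `L^p` (quasi)norm with exponent `p ∈ (0,∞]`. -/
def lgenN (p : ℝ≥0∞) (v f : ℝ → ℝ≥0∞) : ℝ≥0∞ :=
  if p = ∞ then linfN v f else lpN p.toReal v f

/-- Least constant `C` such that `Φ f ≤ C * Ψ f` for every measurable `f`. -/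
def leastC (Φ Ψ : (ℝ → ℝ≥0∞) → ℝ≥0∞) : ℝ≥0∞ :=
  sInf {C : ℝ≥0∞ | ∀ f : ℝ → ℝ≥0∞, Measurable f → Φ f ≤ C * Ψ f}

/-- Oinarov's condition with constant `D`. -/
def Oinarov (k : ℝ → ℝ → ℝ≥0∞) (D : ℝ≥0∞) : Prop :=
  (∀ x y : ℝ, x < y → k x y = 0) ∧
    ∀ x z y : ℝ, 0 ≤ y → y ≤ z → z ≤ x →
      D⁻¹ * (k x z + k z y) ≤ k x y ∧ k x y ≤ D * (k x z + k z y)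

/-- `σ(x) = inf {y > 0 : ∫₀ʸ u ≥ 2∫₀ˣ u}`, with `inf ∅ = ∞`. -/
def sigmaF (u : ℝ → ℝ≥0∞) (x : ℝ) : ℝ≥0∞ :=
  sInf (ENNReal.ofReal '' {y : ℝ | 0 < y ∧ 2 * intTo x u ≤ intTo y u})

/-- `σ⁻¹(x) = inf {y > 0 : ∫₀ʸ u ≥ ½∫₀ˣ u}`. -/
def sigmaInv (u : ℝ → ℝ≥0∞) (x : ℝ) : ℝ :=
  sInf {y : ℝ | 0 < y ∧ intTo x u / 2 ≤ intTo y u}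

/-- The extension of `σ` to a possibly infinite argument. -/
def sigmaE (u : ℝ → ℝ≥0∞) (d : ℝ≥0∞) : ℝ≥0∞ :=
  if d = ∞ then ∞ else sigmaF u d.toReal

/-- `σ² = σ ∘ σ`. -/
def sigma2 (u : ℝ → ℝ≥0∞) (x : ℝ) : ℝ≥0∞ := sigmaE u (sigmaF u x)

/-- `σ³ = σ ∘ σ ∘ σ`. -/
def sigma3 (u : ℝ → ℝ≥0∞) (x : ℝ) : ℝ≥0∞ := sigmaE u (sigma2 u x)

/-- `ζ(x) = sup {y > 0 : ∫_y^∞ u ≥ ½∫ₓ^∞ u}`, with `sup ∅ = 0`. -/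
def zt (u : ℝ → ℝ≥0∞) (x : ℝ) : ℝ :=
  sSup {y : ℝ | 0 < y ∧ intFrom x u / 2 ≤ intFrom y u}

/-- `ζ⁻¹(x) = sup {y > 0 : ∫_y^∞ u ≥ 2∫ₓ^∞ u}`, with `sup ∅ = 0`. -/
def ztInv (u : ℝ → ℝ≥0∞) (x : ℝ) : ℝ :=
  sSup {y : ℝ | 0 < y ∧ 2 * intFrom x u ≤ intFrom y u}

/-- The operator `𝒮` (case `q < ∞`):
`(𝒮f)(x) = (∫₀ˣ w(y) (∫₀ʸ k(y,z) f(z) dz)^q dy)^{1/q}`. -/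
def opSc (q : ℝ) (w : ℝ → ℝ≥0∞) (k : ℝ → ℝ → ℝ≥0∞) (f : ℝ → ℝ≥0∞) (x : ℝ) : ℝ≥0∞ :=
  (intTo x (fun y => w y * (intTo y (fun z => k y z * f z)) ^ q)) ^ (1/q)

def CSc (p r q : ℝ) (u v w : ℝ → ℝ≥0∞) (k : ℝ → ℝ → ℝ≥0∞) : ℝ≥0∞ :=
  leastC (fun f => lpN r u (opSc q w k f)) (lpN p v)

/-- `ζ⁻²`. -/
def ztInv2 (u : ℝ → ℝ≥0∞) (x : ℝ) : ℝ := ztInv u (ztInv u x)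

def bfA0 (p r q : ℝ) (u v w : ℝ → ℝ≥0∞) (k : ℝ → ℝ → ℝ≥0∞) : ℝ≥0∞ :=
  leastC (fun f => (∫⁻ x in Ioi (0:ℝ),
      u x * (intIoo (ztInv2 u x) x w) ^ (r/q) *
        (intTo (ztInv2 u x) (fun z => k (ztInv2 u x) z * f z)) ^ r) ^ (1/r)) (lpN p v)

def bfA1 (p r q : ℝ) (u v w : ℝ → ℝ≥0∞) (k : ℝ → ℝ → ℝ≥0∞) : ℝ≥0∞ :=
  leastC (fun f => (∫⁻ x in Ioi (0:ℝ),
      u x * (intIoo (ztInv2 u x) x (fun y => w y * k y (ztInv2 u x) ^ q)) ^ (r/q) *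
        (intTo (ztInv2 u x) f) ^ r) ^ (1/r)) (lpN p v)

/-- `(ℋ*_d f)(x) = χ_{(0,d]}(x) ∫₀ˣ k(x,z) f(z) dz`. -/
def calHsd (k : ℝ → ℝ → ℝ≥0∞) (d : ℝ) (f : ℝ → ℝ≥0∞) (x : ℝ) : ℝ≥0∞ :=
  if 0 < x ∧ x ≤ d then intTo x (fun z => k x z * f z) else 0

/-- `(ℋ*_{c,d} f)(x) = χ_{(c,d]}(x) ∫_{ζ⁻¹(c)}^x k(x,z) f(z) dz`. -/
def calHscd (u : ℝ → ℝ≥0∞) (k : ℝ → ℝ → ℝ≥0∞) (c d : ℝ) (f : ℝ → ℝ≥0∞) (x : ℝ) : ℝ≥0∞ :=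
  if c < x ∧ x ≤ d then intIoo (ztInv u c) x (fun z => k x z * f z) else 0

def bfA2 (p r q : ℝ) (u v w : ℝ → ℝ≥0∞) (k : ℝ → ℝ → ℝ≥0∞) : ℝ≥0∞ :=
  if p ≤ r then
    ⨆ (t : ℝ) (_ : 0 < t), (intFrom t u) ^ (1/r) *
      leastC (fun f => lpN q w (calHsd k t f)) (lpN p v)
  else
    (∫⁻ x in Ioi (0:ℝ), u x * (intFrom x u) ^ ((1/r - 1/p)⁻¹ / p) *
        leastC (fun f => lpN q w (calHscd u k (ztInv u x) (zt u x) f)) (lpN p v)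
          ^ (1/r - 1/p)⁻¹) ^ (1/r - 1/p)


theorem leastC_le' {Φ Ψ : (ℝ → ℝ≥0∞) → ℝ≥0∞} {C : ℝ≥0∞}
    (h : ∀ f, Measurable f → Ψ f ≠ ∞ → Φ f ≤ C * Ψ f) : leastC Φ Ψ ≤ C := by
  refine ENNReal.le_of_forall_pos_le_add ?_
  intro ε hε hC
  refine sInf_le ?_
  intro f hf
  by_cases hT : Ψ f = ∞
  · rw [hT, ENNReal.mul_top]
    · exact le_top
    · simp [hε.ne']
  · exact (h f hf hT).trans (by gcongr; exact le_self_add)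

theorem le_leastC' {Φ Ψ : (ℝ → ℝ≥0∞) → ℝ≥0∞} (hfin : leastC Φ Ψ ≠ ∞)
    {f : ℝ → ℝ≥0∞} (hf : Measurable f) (hT : Ψ f ≠ ∞) : Φ f ≤ leastC Φ Ψ * Ψ f := by
  by_cases h0 : Ψ f = 0
  · have : ∃ C, ∀ f : ℝ → ℝ≥0∞, Measurable f → Φ f ≤ C * Ψ f := by
      by_contra hne
      push Not at hne
      apply hfin
      unfold leastC
      have : {C : ℝ≥0∞ | ∀ f : ℝ → ℝ≥0∞, Measurable f → Φ f ≤ C * Ψ f} = ∅ := by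
        ext C
        simp only [mem_ofPred_eq, mem_empty_iff_false, iff_false]
        intro hC
        obtain ⟨f, hf, hlt⟩ := hne C
        exact absurd (hC f hf) (not_le.mpr hlt)
      rw [this, sInf_empty]
    obtain ⟨C, hC⟩ := this
    have := hC f hf
    rw [h0, mul_zero] at this ⊢
    exact this
  · rw [← ENNReal.div_le_iff h0 hT]
    refine le_sInf ?_
    intro C hC
    rw [ENNReal.div_le_iff h0 hT]
    exact hC f hf

theorem leastC_mono' {Φ₁ Φ₂ Ψ : (ℝ → ℝ≥0∞) → ℝ≥0∞} {K : ℝ≥0∞} (hK : K ≠ 0)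
    (h : ∀ f, Measurable f → Ψ f ≠ ∞ → Φ₁ f ≤ K * Φ₂ f) :
    leastC Φ₁ Ψ ≤ K * leastC Φ₂ Ψ := by
  by_cases hfin : leastC Φ₂ Ψ = ∞
  · rw [hfin, ENNReal.mul_top hK]; exact le_top
  · refine leastC_le' ?_
    intro f hf hT
    refine (h f hf hT).trans ?_
    rw [mul_assoc]
    gcongr
    exact le_leastC' hfin hf hT

theorem intFrom_eq (u : ℝ → ℝ≥0∞) (t : ℝ) :
    intFrom t u = (volume.withDensity u) (Ioi t) := by
  rw [withDensity_apply _ measurableSet_Ioi]; rfl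

theorem intFrom_anti (u : ℝ → ℝ≥0∞) {s t : ℝ} (h : s ≤ t) : intFrom t u ≤ intFrom s u :=
  lintegral_mono_set (Ioi_subset_Ioi h)

theorem intFrom_right (u : ℝ → ℝ≥0∞) (m : ℝ) (τ : ℝ≥0∞)
    (h : ∀ x, m < x → intFrom x u ≤ τ) : intFrom m u ≤ τ := by
  obtain ⟨a, ha, ham, hat⟩ := exists_seq_strictAnti_tendsto m
  have hU : Ioi m = ⋃ n, Ioi (a n) := by
    ext x
    simp only [mem_Ioi, mem_iUnion]
    constructor
    · intro hx
      exact ((hat.eventually (gt_mem_nhds hx)).exists)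
    · rintro ⟨n, hn⟩; exact (ham n).trans hn
  rw [intFrom_eq, hU, Monotone.measure_iUnion]
  · refine iSup_le fun n => ?_
    rw [← intFrom_eq]; exact h _ (ham n)
  · intro i j hij
    exact Ioi_subset_Ioi (ha.antitone hij)

theorem intFrom_Ici (u : ℝ → ℝ≥0∞) (m : ℝ) : (volume.withDensity u) (Ici m) = intFrom m u := by
  rw [withDensity_apply _ measurableSet_Ici]
  exact setLIntegral_congr Ioi_ae_eq_Ici.symm

theorem intFrom_left (u : ℝ → ℝ≥0∞) (hU : ∀ t : ℝ, 0 < t → intFrom t u ≠ 0 ∧ intFrom t u ≠ ∞)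
    {m : ℝ} (hm : 0 < m) (τ : ℝ≥0∞)
    (h : ∀ x, 0 < x → x < m → τ ≤ intFrom x u) : τ ≤ intFrom m u := by
  obtain ⟨a, ha, ham, hat⟩ := exists_seq_strictMono_tendsto' hm
  have hI : Ici m = ⋂ n, Ioi (a n) := by
    ext x
    simp only [mem_Ici, mem_iInter, mem_Ioi]
    constructor
    · intro hx n
      exact (ham n).2.trans_le hx
    · intro hx
      exact le_of_tendsto' hat fun n => (hx n).le
  rw [← intFrom_Ici, hI, Antitone.measure_iInter]
  · refine le_iInf fun n => ?_
    rw [← intFrom_eq]; exact h _ (ham n).1 (ham n).2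
  · intro i j hij
    exact Ioi_subset_Ioi (ha.monotone hij)
  · intro n; exact measurableSet_Ioi.nullMeasurableSet
  · exact ⟨0, by rw [← intFrom_eq]; exact (hU _ (ham 0).1).2⟩

/-- generalized inverse of the tail integral. -/
def Zt (u : ℝ → ℝ≥0∞) (τ : ℝ≥0∞) : ℝ := sSup {y : ℝ | 0 < y ∧ τ ≤ intFrom y u}

theorem Zt_bdd (u : ℝ → ℝ≥0∞) (hU : ∀ t : ℝ, 0 < t → intFrom t u ≠ 0 ∧ intFrom t u ≠ ∞)
    {τ : ℝ≥0∞} (hτ : τ ≠ 0) : BddAbove {y : ℝ | 0 < y ∧ τ ≤ intFrom y u} := by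
  by_contra hb
  rw [not_bddAbove_iff] at hb
  have key : ∀ n : ℕ, τ ≤ (volume.withDensity u) (Ioi ((n : ℝ) + 1)) := by
    intro n
    obtain ⟨y, hy, hny⟩ := hb ((n : ℝ) + 1)
    rw [← intFrom_eq]
    exact hy.2.trans (intFrom_anti u hny.le)
  have hI : (∅ : Set ℝ) = ⋂ n : ℕ, Ioi ((n : ℝ) + 1) := by
    symm
    rw [Set.eq_empty_iff_forall_notMem]
    intro x hx
    simp only [mem_iInter, mem_Ioi] at hx
    obtain ⟨n, hn⟩ := exists_nat_gt x
    linarith [hx n]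
  have : τ ≤ (volume.withDensity u) (∅ : Set ℝ) := by
    rw [hI, Antitone.measure_iInter]
    · exact le_iInf key
    · intro i j hij
      refine Ioi_subset_Ioi ?_
      have : (i : ℝ) ≤ j := by exact_mod_cast hij
      linarith
    · intro n; exact measurableSet_Ioi.nullMeasurableSet
    · exact ⟨0, by rw [← intFrom_eq]; exact (hU _ (by positivity)).2⟩
  simp at this
  exact hτ this

theorem Zt_nonneg (u : ℝ → ℝ≥0∞) (τ : ℝ≥0∞) : 0 ≤ Zt u τ :=
  Real.sSup_nonneg fun _ hy => hy.1.le

theorem Zt_anti (u : ℝ → ℝ≥0∞) (hU : ∀ t : ℝ, 0 < t → intFrom t u ≠ 0 ∧ intFrom t u ≠ ∞)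
    {τ σ : ℝ≥0∞} (hτ : τ ≠ 0) (h : τ ≤ σ) : Zt u σ ≤ Zt u τ := by
  refine Real.sSup_le ?_ (Zt_nonneg _ _)
  intro y hy
  exact le_csSup (Zt_bdd u hU hτ) ⟨hy.1, h.trans hy.2⟩

theorem Zt_le_of_lt (u : ℝ → ℝ≥0∞) {τ : ℝ≥0∞} {x : ℝ} (hx : 0 ≤ x) (h : intFrom x u < τ) :
    Zt u τ ≤ x := by
  refine Real.sSup_le ?_ hx
  intro y hy
  by_contra hlt
  exact absurd (hy.2.trans (intFrom_anti u (not_le.mp hlt).le)) (not_le.mpr h)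

theorem le_Zt (u : ℝ → ℝ≥0∞) (hU : ∀ t : ℝ, 0 < t → intFrom t u ≠ 0 ∧ intFrom t u ≠ ∞)
    {τ : ℝ≥0∞} (hτ : τ ≠ 0) {x : ℝ} (hx : 0 < x) (h : τ ≤ intFrom x u) : x ≤ Zt u τ :=
  le_csSup (Zt_bdd u hU hτ) ⟨hx, h⟩

theorem intFrom_lt_of_Zt_lt (u : ℝ → ℝ≥0∞)
    (hU : ∀ t : ℝ, 0 < t → intFrom t u ≠ 0 ∧ intFrom t u ≠ ∞)
    {τ : ℝ≥0∞} (hτ : τ ≠ 0) {z : ℝ} (h : Zt u τ < z) : intFrom z u < τ := by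
  by_contra hle
  exact absurd (le_Zt u hU hτ ((Zt_nonneg u τ).trans_lt h) (not_lt.mp hle)) (not_le.mpr h)

theorem intFrom_Zt_le (u : ℝ → ℝ≥0∞)
    (hU : ∀ t : ℝ, 0 < t → intFrom t u ≠ 0 ∧ intFrom t u ≠ ∞)
    {τ : ℝ≥0∞} (hτ : τ ≠ 0) : intFrom (Zt u τ) u ≤ τ :=
  intFrom_right u _ _ fun _ hx => (intFrom_lt_of_Zt_lt u hU hτ hx).le

theorem le_intFrom_Zt (u : ℝ → ℝ≥0∞)
    (hU : ∀ t : ℝ, 0 < t → intFrom t u ≠ 0 ∧ intFrom t u ≠ ∞)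
    {τ : ℝ≥0∞} (hpos : 0 < Zt u τ) : τ ≤ intFrom (Zt u τ) u := by
  refine intFrom_left u hU hpos τ ?_
  intro x hx hlt
  have hne : {y : ℝ | 0 < y ∧ τ ≤ intFrom y u}.Nonempty := by
    by_contra hemp
    rw [Set.not_nonempty_iff_eq_empty] at hemp
    rw [Zt, hemp, Real.sSup_empty] at hpos
    exact lt_irrefl _ hpos
  obtain ⟨y, hy, hxy⟩ := exists_lt_of_lt_csSup hne hlt
  exact hy.2.trans (intFrom_anti u hxy.le)

theorem intFrom_ne_zero (u : ℝ → ℝ≥0∞)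
    (hU : ∀ t : ℝ, 0 < t → intFrom t u ≠ 0 ∧ intFrom t u ≠ ∞) (x : ℝ) : intFrom x u ≠ 0 := by
  intro h
  have h1 := intFrom_anti u (le_max_left x 1)
  rw [h] at h1
  exact (hU (max x 1) (lt_max_of_lt_right one_pos)).1 (le_antisymm h1 bot_le)

theorem ztInv_eq (u : ℝ → ℝ≥0∞) (x : ℝ) : ztInv u x = Zt u (2 * intFrom x u) := rfl
theorem zt_eq (u : ℝ → ℝ≥0∞) (x : ℝ) : zt u x = Zt u (intFrom x u / 2) := rfl

theorem ztInv_mono (u : ℝ → ℝ≥0∞)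
    (hU : ∀ t : ℝ, 0 < t → intFrom t u ≠ 0 ∧ intFrom t u ≠ ∞) : Monotone (ztInv u) := by
  intro x y hxy
  rw [ztInv_eq, ztInv_eq]
  refine Zt_anti u hU ?_ ?_
  · simpa using intFrom_ne_zero u hU y
  · gcongr; exact intFrom_anti u hxy

theorem ztInv_nonneg (u : ℝ → ℝ≥0∞) (x : ℝ) : 0 ≤ ztInv u x := Zt_nonneg _ _

theorem ztInv_le (u : ℝ → ℝ≥0∞)
    (hU : ∀ t : ℝ, 0 < t → intFrom t u ≠ 0 ∧ intFrom t u ≠ ∞) {x : ℝ} (hx : 0 ≤ x) :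
    ztInv u x ≤ x := by
  by_cases h : intFrom x u = ∞
  · refine Real.sSup_le ?_ hx
    intro y hy
    rw [h] at hy
    exfalso
    refine (hU y hy.1).2 ?_
    simpa using hy.2
  · refine Zt_le_of_lt u hx ?_
    rw [two_mul]
    exact ENNReal.lt_add_right h (intFrom_ne_zero u hU x)

theorem ztInv2_nonneg (u : ℝ → ℝ≥0∞) (x : ℝ) : 0 ≤ ztInv2 u x := ztInv_nonneg _ _

theorem ztInv2_le (u : ℝ → ℝ≥0∞)
    (hU : ∀ t : ℝ, 0 < t → intFrom t u ≠ 0 ∧ intFrom t u ≠ ∞) (x : ℝ) :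
    ztInv2 u x ≤ ztInv u x := ztInv_le u hU (ztInv_nonneg _ _)

theorem ztInv2_mono (u : ℝ → ℝ≥0∞)
    (hU : ∀ t : ℝ, 0 < t → intFrom t u ≠ 0 ∧ intFrom t u ≠ ∞) : Monotone (ztInv2 u) :=
  (ztInv_mono u hU).comp (ztInv_mono u hU)

theorem intFrom_ztInv2 (u : ℝ → ℝ≥0∞)
    (hU : ∀ t : ℝ, 0 < t → intFrom t u ≠ 0 ∧ intFrom t u ≠ ∞) {x z : ℝ}
    (h : ztInv2 u x < z) : intFrom z u ≤ 4 * intFrom x u := by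
  have h1 : intFrom z u < 2 * intFrom (ztInv u x) u := by
    refine intFrom_lt_of_Zt_lt u hU ?_ h
    simpa using intFrom_ne_zero u hU _
  have h2 : intFrom (ztInv u x) u ≤ 2 * intFrom x u := by
    refine intFrom_Zt_le u hU ?_
    simpa using intFrom_ne_zero u hU _
  calc intFrom z u ≤ 2 * (2 * intFrom x u) := h1.le.trans (by gcongr)
    _ = 4 * intFrom x u := by rw [← mul_assoc]; norm_num

theorem le_zt (u : ℝ → ℝ≥0∞)
    (hU : ∀ t : ℝ, 0 < t → intFrom t u ≠ 0 ∧ intFrom t u ≠ ∞) {x : ℝ} (hx : 0 < x) :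
    x ≤ zt u x := by
  refine le_Zt u hU ?_ hx ENNReal.half_le_self
  simpa using intFrom_ne_zero u hU _

/-- the `u`-measure of a set on which the tail integral is at most `τ`. -/
theorem meas_level_le (u : ℝ → ℝ≥0∞) {A : Set ℝ} (hA : A ⊆ Ioi 0) {τ : ℝ≥0∞}
    (h : ∀ x ∈ A, intFrom x u ≤ τ) : (volume.withDensity u) A ≤ τ := by
  rcases A.eq_empty_or_nonempty with rfl | hne
  · simp
  have hb : BddBelow A := ⟨0, fun x hx => (hA hx).le⟩
  have h1 : intFrom (sInf A) u ≤ τ := by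
    refine intFrom_right u _ _ ?_
    intro x hx
    obtain ⟨a, ha, hax⟩ := exists_lt_of_csInf_lt hne hx
    exact (intFrom_anti u hax.le).trans (h a ha)
  refine le_trans (measure_mono (t := Ici (sInf A)) ?_) ((intFrom_Ici u _).trans_le h1)
  intro x hx
  exact csInf_le hb hx


/-- the measure `u dx` on `(0,∞)`. -/
def nuM (u : ℝ → ℝ≥0∞) : Measure ℝ := (volume.withDensity u).restrict (Ioi 0)

theorem lintegral_nuM {u F : ℝ → ℝ≥0∞} (hu : Measurable u) (hF : Measurable F) :
    ∫⁻ x, F x ∂(nuM u) = ∫⁻ x in Ioi (0:ℝ), u x * F x := by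
  unfold nuM
  rw [setLIntegral_withDensity_eq_setLIntegral_mul _ hu hF measurableSet_Ioi]
  rfl

theorem measurable_var_intIoo {X : Type*} [MeasurableSpace X] {c d : X → ℝ}
    {h : X → ℝ → ℝ≥0∞} (hc : Measurable c) (hd : Measurable d)
    (hh : Measurable (Function.uncurry h)) :
    Measurable (fun x => intIoo (c x) (d x) (h x)) := by
  have hS : MeasurableSet {p : X × ℝ | c p.1 < p.2 ∧ p.2 < d p.1} :=
    (measurableSet_lt (hc.comp measurable_fst) measurable_snd).inter
      (measurableSet_lt measurable_snd (hd.comp measurable_fst))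
  have h1 := (hh.indicator hS).lintegral_prod_right' (ν := (volume : Measure ℝ))
  convert h1 using 2 with x
  unfold intIoo
  rw [← lintegral_indicator measurableSet_Ioo]
  rfl

theorem half_lemma {u : ℝ → ℝ≥0∞}
    (hU : ∀ t : ℝ, 0 < t → intFrom t u ≠ 0 ∧ intFrom t u ≠ ∞)
    {G : ℝ → ℝ} (hG : Monotone G) (hG0 : ∀ x ≤ 0, G x = 0) :
    ∫⁻ x, ENNReal.ofReal (G (ztInv u x)) ∂(nuM u) ≤
      (∫⁻ x, ENNReal.ofReal (G x) ∂(nuM u)) / 2 := by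
  have hnn : ∀ x, 0 ≤ G x := by
    intro x
    rcases le_total x 0 with h | h
    · exact (hG0 x h).ge
    · exact (hG0 0 le_rfl).ge.trans (hG h)
  rw [lintegral_eq_lintegral_meas_lt (f := fun x => G (ztInv u x)) _
      (Filter.Eventually.of_forall fun x => hnn _)
      ((hG.comp (ztInv_mono u hU)).measurable.aemeasurable),
    lintegral_eq_lintegral_meas_lt (f := G) _
      (Filter.Eventually.of_forall fun x => hnn _) hG.measurable.aemeasurable]
  rw [div_eq_mul_inv, ← lintegral_mul_const' _ _ (by simp)]
  refine setLIntegral_mono' measurableSet_Ioi ?_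
  intro t ht
  have ht : 0 < t := ht
  have hsub : {a | t < G a} ⊆ Ioi 0 := by
    intro x hx
    by_contra hle
    have hx' : t < G x := hx
    rw [hG0 x (not_lt.mp hle)] at hx'
    linarith
  have hI : nuM u {a | t < G a} = volume.withDensity u {a | t < G a} := by
    unfold nuM
    rw [Measure.restrict_apply' measurableSet_Ioi, inter_eq_left.mpr hsub]
  rw [hI]
  unfold nuM
  rw [Measure.restrict_apply' measurableSet_Ioi]
  refine meas_level_le u inter_subset_right ?_
  rintro x ⟨hx, hx0⟩
  have hx' : t < G (ztInv u x) := hx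
  have hpos : 0 < ztInv u x := hsub hx'
  have h1 : 2 * intFrom x u ≤ intFrom (ztInv u x) u := le_intFrom_Zt u hU hpos
  have h2 : intFrom (ztInv u x) u ≤ volume.withDensity u {a | t < G a} := by
    rw [intFrom_eq]
    refine measure_mono ?_
    intro y hy
    exact hx'.trans_le (hG (le_of_lt hy))
  rw [← div_eq_mul_inv, ENNReal.le_div_iff_mul_le (by simp) (by simp), mul_comm]
  exact h1.trans h2

theorem rpow_add_absorb {a : ℝ} (ha : 0 < a) : ∃ C : ℝ≥0∞, C ≠ ∞ ∧
    ∀ A B : ℝ≥0∞, (A + B) ^ a ≤ (3/2) * A ^ a + C * B ^ a := by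
  set d : ℝ := (3/2 : ℝ) ^ (1/a) - 1 with hd
  have hd0 : 0 < d := by
    have : (1:ℝ) < (3/2 : ℝ) ^ (1/a) := Real.one_lt_rpow (by norm_num) (by positivity)
    linarith
  set δ : ℝ≥0∞ := ENNReal.ofReal d with hδ
  have hδ0 : δ ≠ 0 := by simpa [hδ] using hd0
  have hδt : δ ≠ ∞ := ENNReal.ofReal_ne_top
  have h32 : (1 + δ) ^ a = 3/2 := by
    have : (1 + δ) = ENNReal.ofReal ((3/2 : ℝ) ^ (1/a)) := by
      rw [hδ, ← ENNReal.ofReal_one, ← ENNReal.ofReal_add zero_le_one hd0.le]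
      congr 1; rw [hd]; ring
    rw [this, ENNReal.ofReal_rpow_of_nonneg (by positivity) ha.le,
      ← Real.rpow_mul (by norm_num), one_div_mul_cancel ha.ne', Real.rpow_one,
      ENNReal.ofReal_div_of_pos (by norm_num)]
    simp
  refine ⟨(1 + δ⁻¹) ^ a, ?_, ?_⟩
  · refine ENNReal.rpow_ne_top_of_nonneg ha.le ?_
    simp [hδ0]
  · intro A B
    rcases le_total B (δ * A) with h | h
    · calc (A + B) ^ a ≤ ((1 + δ) * A) ^ a := by
            gcongr
            rw [add_mul, one_mul]; gcongr
        _ = (3/2) * A ^ a := by rw [ENNReal.mul_rpow_of_nonneg _ _ ha.le, h32]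
        _ ≤ _ := le_self_add
    · calc (A + B) ^ a ≤ ((1 + δ⁻¹) * B) ^ a := by
            gcongr
            rw [add_mul, one_mul, add_comm]; gcongr
            rw [mul_comm, ← div_eq_mul_inv, ENNReal.le_div_iff_mul_le (Or.inl hδ0) (Or.inl hδt),
              mul_comm]
            exact h
        _ = (1 + δ⁻¹) ^ a * B ^ a := by rw [ENNReal.mul_rpow_of_nonneg _ _ ha.le]
        _ ≤ _ := le_add_self

theorem intTo_mono_right (g : ℝ → ℝ≥0∞) : Monotone (fun x => intTo x g) :=
  fun _ _ h => lintegral_mono_set (Ioo_subset_Ioo_right h)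

theorem intTo_split (g : ℝ → ℝ≥0∞) (c x : ℝ) :
    intTo x g ≤ intTo c g + intIoo c x g := by
  have hsub : Ioo (0:ℝ) x ⊆ Ioc 0 c ∪ Ioo c x := by
    intro y hy
    rcases le_or_gt y c with h | h
    · exact Or.inl ⟨hy.1, h⟩
    · exact Or.inr ⟨h, hy.2⟩
  have h0 : intTo c g = ∫⁻ y in Ioc 0 c, g y := setLIntegral_congr Ioo_ae_eq_Ioc
  rw [h0]
  exact (lintegral_mono_set hsub).trans (lintegral_union_le _ _ _)

theorem block_bdd {a : ℝ} (ha : 0 < a) {C : ℝ≥0∞}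
    (hC : ∀ A B : ℝ≥0∞, (A + B) ^ a ≤ (3/2) * A ^ a + C * B ^ a)
    {u g : ℝ → ℝ≥0∞} (_hu : Measurable u) (hg : Measurable g)
    (hU : ∀ t : ℝ, 0 < t → intFrom t u ≠ 0 ∧ intFrom t u ≠ ∞)
    {B : ℝ≥0∞} (hB : B ≠ ∞) {ε : ℝ} (hε : 0 < ε)
    (hgB : ∀ x, intTo x g ≤ B) (hgε : ∀ x ≤ ε, intTo x g = 0) :
    ∫⁻ x, (intTo x g) ^ a ∂(nuM u) ≤
      (4 * C) * ∫⁻ x, (intIoo (ztInv u x) x g) ^ a ∂(nuM u) := by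
  set K := ∫⁻ x, (intTo x g) ^ a ∂(nuM u) with hK
  have hKfin : K ≠ ∞ := by
    have h1 : K ≤ ∫⁻ x, (Ioi ε).indicator (fun _ => B ^ a) x ∂(volume.withDensity u) := by
      refine (lintegral_mono' Measure.restrict_le_self le_rfl).trans (lintegral_mono ?_)
      intro x
      by_cases hx : x ≤ ε
      · simp [hgε x hx, ha]
      · rw [indicator_of_mem (by simpa using hx)]
        exact ENNReal.rpow_le_rpow (hgB x) ha.le
    rw [lintegral_indicator_const measurableSet_Ioi, ← intFrom_eq] at h1
    refine ne_top_of_le_ne_top (ENNReal.mul_ne_top ?_ (hU ε hε).2) h1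
    exact ENNReal.rpow_ne_top_of_nonneg ha.le hB
  have hFfin : ∀ x, intTo x g ≠ ∞ := fun x => ne_top_of_le_ne_top hB (hgB x)
  have hG : ∀ x, ENNReal.ofReal ((intTo x g).toReal ^ a) = (intTo x g) ^ a := by
    intro x
    rw [← ENNReal.ofReal_rpow_of_nonneg ENNReal.toReal_nonneg ha.le,
      ENNReal.ofReal_toReal (hFfin x)]
  have hhalf := half_lemma hU (G := fun x => (intTo x g).toReal ^ a)
    (by
      intro x y hxy
      exact Real.rpow_le_rpow ENNReal.toReal_nonneg
        (ENNReal.toReal_mono (hFfin y) (intTo_mono_right g hxy)) ha.le)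
    (by
      intro x hx
      simp [hgε x (hx.trans hε.le), ha.ne'])
  simp only [hG] at hhalf
  rw [← hK] at hhalf
  have hmeas1 : Measurable fun x => (3/2 : ℝ≥0∞) * (intTo (ztInv u x) g) ^ a :=
    ((((intTo_mono_right g).comp (ztInv_mono u hU)).measurable).pow_const a).const_mul _
  have hmeas2 : Measurable fun x => (intIoo (ztInv u x) x g) ^ a :=
    (measurable_var_intIoo (h := fun _ => g) (ztInv_mono u hU).measurable measurable_id
      (hg.comp measurable_snd)).pow_const a
  set R := ∫⁻ x, (intIoo (ztInv u x) x g) ^ a ∂(nuM u) with hR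
  have h1 : K ≤ (3/2) * (K / 2) + C * R := by
    calc K ≤ ∫⁻ x, ((3/2) * (intTo (ztInv u x) g) ^ a + C * (intIoo (ztInv u x) x g) ^ a)
          ∂(nuM u) := by
          refine lintegral_mono fun x => ?_
          exact (ENNReal.rpow_le_rpow (intTo_split g (ztInv u x) x) ha.le).trans (hC _ _)
      _ = (3/2) * (∫⁻ x, (intTo (ztInv u x) g) ^ a ∂(nuM u)) + C * R := by
          rw [lintegral_add_left hmeas1, lintegral_const_mul' _ _
            (by simp [ENNReal.div_eq_top]), lintegral_const_mul _ hmeas2]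
      _ ≤ _ := by gcongr
  rw [mul_assoc]
  clear_value K
  generalize C * R = X at h1 ⊢
  by_cases hX : X = ∞
  · simp [hX]
  · lift K to NNReal using hKfin
    lift X to NNReal using hX
    have h2 := ENNReal.toReal_mono (by
      refine ENNReal.add_ne_top.mpr ⟨ENNReal.mul_ne_top (by simp [ENNReal.div_eq_top])
        (by simp [ENNReal.div_eq_top]), by simp⟩) h1
    rw [ENNReal.toReal_add (ENNReal.mul_ne_top (by simp [ENNReal.div_eq_top])
        (by simp [ENNReal.div_eq_top])) (by simp)] at h2
    simp only [ENNReal.toReal_mul, ENNReal.toReal_div, ENNReal.coe_toReal,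
      ENNReal.toReal_ofNat] at h2
    have h3 : K ≤ 4 * X := by
      rw [← NNReal.coe_le_coe]
      push_cast
      linarith
    exact_mod_cast h3

theorem block_lemma {a : ℝ} (ha : 0 < a) : ∃ C : ℝ≥0∞, C ≠ ∞ ∧
    ∀ u g : ℝ → ℝ≥0∞, Measurable u → Measurable g →
    (∀ t : ℝ, 0 < t → intFrom t u ≠ 0 ∧ intFrom t u ≠ ∞) →
    ∫⁻ x, (intTo x g) ^ a ∂(nuM u) ≤
      C * ∫⁻ x, (intIoo (ztInv u x) x g) ^ a ∂(nuM u) := by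
  obtain ⟨C, hCt, hC⟩ := rpow_add_absorb ha
  refine ⟨4 * C, ENNReal.mul_ne_top (by simp) hCt, ?_⟩
  intro u g hu hg hU
  set S : ℕ → Set ℝ := fun n => Ioo (1 / ((n:ℝ) + 1)) (n + 1) with hS
  set G : ℕ → ℝ → ℝ≥0∞ := fun n => (S n).indicator (fun x => min (g x) n) with hGdef
  have hGm : ∀ n, Measurable (G n) := fun n =>
    (hg.min measurable_const).indicator measurableSet_Ioo
  have hGle : ∀ n x, G n x ≤ g x := by
    intro n x
    refine (indicator_le_self' (fun _ _ => bot_le) x).trans (min_le_left _ _)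
  have hSmono : Monotone S := by
    intro i j hij
    have : (i : ℝ) ≤ j := by exact_mod_cast hij
    refine Ioo_subset_Ioo ?_ (by linarith)
    exact one_div_le_one_div_of_le (by positivity) (by linarith)
  have hGmono : ∀ x, Monotone fun n => G n x := by
    intro x i j hij
    by_cases hx : x ∈ S i
    · simp only [hGdef]
      rw [indicator_of_mem hx, indicator_of_mem (hSmono hij hx)]
      exact min_le_min le_rfl (by exact_mod_cast hij)
    · simp only [hGdef]
      rw [indicator_of_notMem hx]; exact bot_le
  have hGlim : ∀ x, 0 < x → Filter.Tendsto (fun n => G n x) Filter.atTop (nhds (g x)) := by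
    intro x hx
    have h1 : Filter.Tendsto (fun n : ℕ => min (g x) (n : ℝ≥0∞)) Filter.atTop
        (nhds (min (g x) ∞)) := tendsto_const_nhds.min ENNReal.tendsto_nat_nhds_top
    rw [min_eq_left le_top] at h1
    refine h1.congr' ?_
    obtain ⟨N, hN⟩ := exists_nat_gt (max x (1/x))
    filter_upwards [Filter.eventually_ge_atTop N] with n hn
    have hn' : (N : ℝ) ≤ n := by exact_mod_cast hn
    have hx1 : x < n := (le_max_left _ _).trans_lt (hN.trans_le hn')
    have hx2 : 1/x < n := (le_max_right _ _).trans_lt (hN.trans_le hn')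
    have : x ∈ S n := by
      refine ⟨?_, by linarith⟩
      rw [div_lt_comm₀ (by positivity) hx]
      linarith
    simp only [hGdef]
    rw [indicator_of_mem this]
  have hF : ∀ x, Filter.Tendsto (fun n => intTo x (G n)) Filter.atTop (nhds (intTo x g)) := by
    intro x
    refine lintegral_tendsto_of_tendsto_of_monotone (fun n => (hGm n).aemeasurable)
      (Filter.Eventually.of_forall hGmono) ?_
    refine (ae_restrict_iff' measurableSet_Ioo).mpr (Filter.Eventually.of_forall ?_)
    intro y hy
    exact hGlim y hy.1
  have hFF : Filter.Tendsto (fun n => ∫⁻ x, (intTo x (G n)) ^ a ∂(nuM u)) Filter.atTop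
      (nhds (∫⁻ x, (intTo x g) ^ a ∂(nuM u))) := by
    refine lintegral_tendsto_of_tendsto_of_monotone
      (fun n => ((intTo_mono_right (G n)).measurable.pow_const a).aemeasurable)
      (Filter.Eventually.of_forall ?_) (Filter.Eventually.of_forall ?_)
    · intro x i j hij
      exact ENNReal.rpow_le_rpow (lintegral_mono fun y => hGmono y hij) ha.le
    · intro x
      exact (ENNReal.continuous_rpow_const.tendsto _).comp (hF x)
  refine le_of_tendsto' hFF fun n => ?_
  refine (block_bdd ha hC hu (hGm n) hU (B := n * volume (S n)) ?_
    (ε := 1 / ((n:ℝ) + 1)) (by positivity) ?_ ?_).trans ?_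
  · refine ENNReal.mul_ne_top (by simp) ?_
    simp [hS]
  · intro x
    calc intTo x (G n) ≤ ∫⁻ y, G n y := setLIntegral_le_lintegral _ _
      _ ≤ ∫⁻ y, (S n).indicator (fun _ => (n : ℝ≥0∞)) y := by
          refine lintegral_mono fun y => ?_
          exact indicator_le_indicator (min_le_right _ _)
      _ = n * volume (S n) := lintegral_indicator_const measurableSet_Ioo _
  · intro x hx
    unfold intTo
    rw [setLIntegral_congr_fun (g := fun _ => 0) measurableSet_Ioo]
    · simp
    · intro y hy
      simp only [hGdef]
      rw [indicator_of_notMem]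
      intro hyS
      exact absurd (hyS.1.trans hy.2) (not_lt.mpr hx)
  · gcongr
    exact lintegral_mono fun y => hGle n y


/-- the inner operator. -/
def Vop (k : ℝ → ℝ → ℝ≥0∞) (f : ℝ → ℝ≥0∞) (y : ℝ) : ℝ≥0∞ := intTo y (fun z => k y z * f z)

theorem measurable_Vop {k : ℝ → ℝ → ℝ≥0∞} (hk : Measurable (Function.uncurry k))
    {f : ℝ → ℝ≥0∞} (hf : Measurable f) : Measurable (Vop k f) := by
  refine measurable_var_intIoo (c := fun _ => (0:ℝ)) (d := id)
    (h := fun y z => k y z * f z) measurable_const measurable_id ?_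
  exact hk.mul (hf.comp measurable_snd)

theorem opSc_eq (q : ℝ) (w : ℝ → ℝ≥0∞) (k : ℝ → ℝ → ℝ≥0∞) (f : ℝ → ℝ≥0∞) (x : ℝ) :
    opSc q w k f x = (intTo x (fun y => w y * Vop k f y ^ q)) ^ (1/q) := rfl

theorem opSc_rpow {q r : ℝ} (_hq : 0 < q) (w : ℝ → ℝ≥0∞) (k : ℝ → ℝ → ℝ≥0∞)
    (f : ℝ → ℝ≥0∞) (x : ℝ) :
    opSc q w k f x ^ r = (intTo x (fun y => w y * Vop k f y ^ q)) ^ (r/q) := by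
  rw [opSc_eq, ← ENNReal.rpow_mul]; congr 1; ring

theorem measurable_opSc_base {q : ℝ} {w : ℝ → ℝ≥0∞} {k : ℝ → ℝ → ℝ≥0∞} {f : ℝ → ℝ≥0∞} :
    Measurable (fun x => intTo x (fun y => w y * Vop k f y ^ q)) :=
  (intTo_mono_right _).measurable

/-- pointwise estimate behind the lower bounds of `A₀` and `A₁`. -/
theorem lower_pt {q r : ℝ} (hq : 0 < q) (hr : 0 < r) {D : ℝ≥0∞} (_hD0 : D ≠ 0) (hD : D ≠ ∞)
    {w g f : ℝ → ℝ≥0∞} {k : ℝ → ℝ → ℝ≥0∞} {P : ℝ≥0∞} {c x : ℝ} (hc : 0 ≤ c)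
    (hwg : Measurable (fun y => w y * g y ^ q))
    (h : ∀ y, c < y → y < x → g y * P ≤ D * Vop k f y) :
    (intIoo c x (fun y => w y * g y ^ q)) ^ (r/q) * P ^ r ≤ D ^ r * opSc q w k f x ^ r := by
  rw [opSc_rpow hq]
  have e1 : P ^ r = (P ^ q) ^ (r/q) := by
    rw [← ENNReal.rpow_mul]; congr 1; field_simp
  have e2 : D ^ r = (D ^ q) ^ (r/q) := by
    rw [← ENNReal.rpow_mul]; congr 1; field_simp
  have hrq : 0 ≤ r / q := by positivity
  rw [e1, e2, ← ENNReal.mul_rpow_of_nonneg _ _ hrq, ← ENNReal.mul_rpow_of_nonneg _ _ hrq]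
  refine ENNReal.rpow_le_rpow ?_ hrq
  unfold intIoo
  rw [← lintegral_mul_const _ hwg]
  calc ∫⁻ y in Ioo c x, w y * g y ^ q * P ^ q
      ≤ ∫⁻ y in Ioo c x, D ^ q * (w y * Vop k f y ^ q) := by
        refine setLIntegral_mono' measurableSet_Ioo ?_
        intro y hy
        calc w y * g y ^ q * P ^ q = w y * (g y * P) ^ q := by
              rw [ENNReal.mul_rpow_of_nonneg _ _ hq.le, mul_assoc]
          _ ≤ w y * (D * Vop k f y) ^ q := by
              exact mul_le_mul' le_rfl (ENNReal.rpow_le_rpow (h y hy.1 hy.2) hq.le)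
          _ = D ^ q * (w y * Vop k f y ^ q) := by
              rw [ENNReal.mul_rpow_of_nonneg _ _ hq.le]; ring
    _ = D ^ q * ∫⁻ y in Ioo c x, (w y * Vop k f y ^ q) := by
        rw [lintegral_const_mul' _ _ (ENNReal.rpow_ne_top_of_nonneg hq.le hD)]
    _ ≤ _ := by
        gcongr
        exact lintegral_mono_set (Ioo_subset_Ioo_left hc)

theorem oinarov_lower {k : ℝ → ℝ → ℝ≥0∞} {D : ℝ≥0∞} (hD0 : D ≠ 0) (hD : D ≠ ∞)
    (hO : Oinarov k D) {x z y : ℝ} (hy : 0 ≤ y) (hyz : y ≤ z) (hzx : z ≤ x) :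
    k x z + k z y ≤ D * k x y := by
  have h := (hO.2 x z y hy hyz hzx).1
  calc k x z + k z y = D * (D⁻¹ * (k x z + k z y)) := by
        rw [← mul_assoc, ENNReal.mul_inv_cancel hD0 hD, one_mul]
    _ ≤ _ := by gcongr

theorem lower_A0_pt {k : ℝ → ℝ → ℝ≥0∞} {D : ℝ≥0∞} (hD0 : D ≠ 0) (hD : D ≠ ∞)
    (hO : Oinarov k D) {f : ℝ → ℝ≥0∞} {c y : ℝ} (hcy : c < y) :
    intTo c (fun z => k c z * f z) ≤ D * Vop k f y := by
  unfold Vop intTo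
  rw [← lintegral_const_mul' _ _ hD]
  refine le_trans ?_ (lintegral_mono_set (Ioo_subset_Ioo_right hcy.le))
  refine setLIntegral_mono' measurableSet_Ioo ?_
  intro z hz
  rw [← mul_assoc]
  gcongr
  exact le_add_self.trans (oinarov_lower hD0 hD hO hz.1.le hz.2.le hcy.le)

theorem lower_A1_pt {k : ℝ → ℝ → ℝ≥0∞} {D : ℝ≥0∞} (hD0 : D ≠ 0) (hD : D ≠ ∞)
    (hO : Oinarov k D) {f : ℝ → ℝ≥0∞} (hf : Measurable f) {c y : ℝ} (hcy : c < y) :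
    k y c * intTo c f ≤ D * Vop k f y := by
  unfold Vop intTo
  rw [← lintegral_const_mul' _ _ hD, ← lintegral_const_mul _ hf]
  refine le_trans ?_ (lintegral_mono_set (Ioo_subset_Ioo_right hcy.le))
  refine setLIntegral_mono' measurableSet_Ioo ?_
  intro z hz
  rw [← mul_assoc]
  gcongr
  exact le_self_add.trans (oinarov_lower hD0 hD hO hz.1.le hz.2.le hcy.le)

theorem lpN_opSc {q r : ℝ} (hq : 0 < q) {u w : ℝ → ℝ≥0∞} (hu : Measurable u)
    (k : ℝ → ℝ → ℝ≥0∞) (f : ℝ → ℝ≥0∞) :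
    lpN r u (opSc q w k f) =
      (∫⁻ x, (intTo x (fun y => w y * Vop k f y ^ q)) ^ (r/q) ∂(nuM u)) ^ (1/r) := by
  unfold lpN
  rw [lintegral_nuM hu ((measurable_opSc_base).pow_const _)]
  simp_rw [opSc_rpow hq, mul_comm (u _)]

theorem lower_lift {q r : ℝ} (hr : 0 < r) {D : ℝ≥0∞} (hD : D ≠ ∞)
    {u w : ℝ → ℝ≥0∞} {k : ℝ → ℝ → ℝ≥0∞} {f A B : ℝ → ℝ≥0∞}
    (h : ∀ x, A x * B x ^ r ≤ D ^ r * opSc q w k f x ^ r) :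
    (∫⁻ x in Ioi (0:ℝ), u x * A x * B x ^ r) ^ (1/r) ≤ D * lpN r u (opSc q w k f) := by
  have : D = (D ^ r) ^ (1/r) := by
    rw [← ENNReal.rpow_mul, mul_one_div_cancel hr.ne', ENNReal.rpow_one]
  unfold lpN
  conv_rhs => rw [this]
  rw [← ENNReal.mul_rpow_of_nonneg _ _ (by positivity)]
  refine ENNReal.rpow_le_rpow ?_ (by positivity)
  rw [← lintegral_const_mul' _ _ (ENNReal.rpow_ne_top_of_nonneg hr.le hD)]
  refine lintegral_mono fun x => ?_
  calc u x * A x * B x ^ r = u x * (A x * B x ^ r) := by rw [mul_assoc]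
    _ ≤ u x * (D ^ r * opSc q w k f x ^ r) := mul_le_mul' le_rfl (h x)
    _ = _ := by ring

theorem lower_A0 {p q r : ℝ} (hq : 0 < q) (hr : 0 < r) {D : ℝ≥0∞} (hD0 : D ≠ 0) (hD : D ≠ ∞)
    {u v w : ℝ → ℝ≥0∞} {k : ℝ → ℝ → ℝ≥0∞} (hw : Measurable w) (hO : Oinarov k D) :
    bfA0 p r q u v w k ≤ D * CSc p r q u v w k := by
  refine leastC_mono' hD0 ?_
  intro f hf _
  refine lower_lift hr hD fun x => ?_
  have := lower_pt (g := fun _ => 1) (P := intTo (ztInv2 u x) fun z => k (ztInv2 u x) z * f z)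
    (w := w) (f := f) (k := k) (x := x) hq hr hD0 hD (ztInv2_nonneg u x)
    (by simpa using hw) (fun y hy _ => by
      rw [one_mul]; exact lower_A0_pt hD0 hD hO hy)
  simpa using this

theorem lower_A1 {p q r : ℝ} (hq : 0 < q) (hr : 0 < r) {D : ℝ≥0∞} (hD0 : D ≠ 0) (hD : D ≠ ∞)
    {u v w : ℝ → ℝ≥0∞} {k : ℝ → ℝ → ℝ≥0∞} (hw : Measurable w)
    (hk : Measurable (Function.uncurry k)) (hO : Oinarov k D) :
    bfA1 p r q u v w k ≤ D * CSc p r q u v w k := by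
  refine leastC_mono' hD0 ?_
  intro f hf _
  refine lower_lift hr hD fun x => ?_
  have hk' : Measurable fun y => k y (ztInv2 u x) :=
    hk.comp (measurable_id.prodMk measurable_const)
  exact lower_pt (g := fun y => k y (ztInv2 u x)) (P := intTo (ztInv2 u x) f)
    (w := w) (f := f) (k := k) (x := x) hq hr hD0 hD (ztInv2_nonneg u x)
    (hw.mul (hk'.pow_const q)) (fun y hy _ => lower_A1_pt hD0 hD hO hf hy)

theorem lpN_calHsd {q : ℝ} (hq : 0 < q) {w : ℝ → ℝ≥0∞} {k : ℝ → ℝ → ℝ≥0∞} (t : ℝ)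
    (f : ℝ → ℝ≥0∞) :
    lpN q w (calHsd k t f) = (intTo t (fun y => w y * Vop k f y ^ q)) ^ (1/q) := by
  unfold lpN intTo
  congr 1
  rw [setLIntegral_congr (μ := volume) (Ioo_ae_eq_Ioc (a := (0:ℝ)) (b := t)),
    ← lintegral_indicator measurableSet_Ioi, ← lintegral_indicator measurableSet_Ioc]
  congr 1
  ext y
  by_cases h0 : 0 < y
  · rw [indicator_of_mem (by exact h0)]
    by_cases hy : y ≤ t
    · rw [indicator_of_mem (by exact ⟨h0, hy⟩)]
      unfold calHsd
      rw [if_pos ⟨h0, hy⟩, mul_comm]; rfl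
    · rw [indicator_of_notMem (by exact fun h => hy h.2)]
      unfold calHsd
      rw [if_neg (fun h => hy h.2)]
      simp [hq]
  · rw [indicator_of_notMem (by exact h0), indicator_of_notMem (by exact fun h => h0 h.1)]

theorem lower_Hsd {p q r : ℝ} (hq : 0 < q) (hr : 0 < r)
    {u v w : ℝ → ℝ≥0∞} {k : ℝ → ℝ → ℝ≥0∞} (hu : Measurable u)
    (hU : ∀ t : ℝ, 0 < t → intFrom t u ≠ 0 ∧ intFrom t u ≠ ∞) {t : ℝ} (ht : 0 < t) :
    (intFrom t u) ^ (1/r) * leastC (fun f => lpN q w (calHsd k t f)) (lpN p v) ≤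
      CSc p r q u v w k := by
  have hU0 : (intFrom t u) ^ (1/r) ≠ 0 := by
    simp [ENNReal.rpow_eq_zero_iff, (hU t ht).1, (hU t ht).2]
  have hUt : (intFrom t u) ^ (1/r) ≠ ∞ :=
    ENNReal.rpow_ne_top_of_nonneg (by positivity) (hU t ht).2
  have key : leastC (fun f => lpN q w (calHsd k t f)) (lpN p v) ≤
      ((intFrom t u) ^ (1/r))⁻¹ * CSc p r q u v w k := by
    refine leastC_mono' (by simpa using hUt) ?_
    intro f hf _
    rw [lpN_calHsd hq, mul_comm, ← div_eq_mul_inv,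
      ENNReal.le_div_iff_mul_le (Or.inl hU0) (Or.inl hUt)]
    unfold lpN
    have e : (intTo t (fun y => w y * Vop k f y ^ q)) ^ (1/q) =
        (opSc q w k f t ^ r) ^ (1/r) := by
      rw [← ENNReal.rpow_mul, mul_one_div_cancel hr.ne', ENNReal.rpow_one]; rfl
    rw [e, ← ENNReal.mul_rpow_of_nonneg _ _ (by positivity)]
    refine ENNReal.rpow_le_rpow ?_ (by positivity)
    unfold intFrom
    rw [← lintegral_const_mul _ hu]
    refine le_trans ?_ (lintegral_mono_set (Ioi_subset_Ioi ht.le))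
    refine setLIntegral_mono' measurableSet_Ioi ?_
    intro x hx
    gcongr
    refine ENNReal.rpow_le_rpow ?_ (by positivity)
    exact intTo_mono_right _ (le_of_lt hx)
  calc _ ≤ (intFrom t u) ^ (1/r) * (((intFrom t u) ^ (1/r))⁻¹ * CSc p r q u v w k) := by gcongr
    _ = _ := by rw [← mul_assoc, ENNReal.mul_inv_cancel hU0 hUt, one_mul]


theorem lpN_calHsd_smul {q : ℝ} (hq : 0 < q) {w : ℝ → ℝ≥0∞} {k : ℝ → ℝ → ℝ≥0∞} (t : ℝ)
    (f : ℝ → ℝ≥0∞) {c : ℝ≥0∞} (hc : c ≠ ∞) :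
    lpN q w (calHsd k t (fun z => c * f z)) = c * lpN q w (calHsd k t f) := by
  rw [lpN_calHsd hq, lpN_calHsd hq]
  have hV : ∀ y, Vop k (fun z => c * f z) y = c * Vop k f y := by
    intro y
    unfold Vop intTo
    rw [← lintegral_const_mul' _ _ hc]
    congr 1; ext z; ring
  have e : c = (c ^ q) ^ (1/q) := by
    rw [← ENNReal.rpow_mul, mul_one_div_cancel hq.ne', ENNReal.rpow_one]
  conv_rhs => rw [e]
  rw [← ENNReal.mul_rpow_of_nonneg _ _ (by positivity)]
  congr 1
  unfold intTo
  rw [← lintegral_const_mul' _ _ (ENNReal.rpow_ne_top_of_nonneg hq.le hc)]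
  congr 1; ext y
  simp only [hV]
  rw [ENNReal.mul_rpow_of_nonneg _ _ hq.le]; ring

theorem lpN_smul {p : ℝ} (hp : 0 < p) {v : ℝ → ℝ≥0∞}
    (f : ℝ → ℝ≥0∞) {c : ℝ≥0∞} (hc : c ≠ ∞) :
    lpN p v (fun z => c * f z) = c * lpN p v f := by
  have e : c = (c ^ p) ^ (1/p) := by
    rw [← ENNReal.rpow_mul, mul_one_div_cancel hp.ne', ENNReal.rpow_one]
  conv_rhs => rw [e]
  unfold lpN
  rw [← ENNReal.mul_rpow_of_nonneg _ _ (by positivity)]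
  congr 1
  rw [← lintegral_const_mul' _ _ (ENNReal.rpow_ne_top_of_nonneg hp.le hc)]
  congr 1; ext y
  rw [ENNReal.mul_rpow_of_nonneg _ _ hp.le]; ring

theorem near_extremal {p q : ℝ} (hp : 0 < p) (hq : 0 < q) {v w : ℝ → ℝ≥0∞}
    {k : ℝ → ℝ → ℝ≥0∞} (t : ℝ)
    (hN : leastC (fun f => lpN q w (calHsd k t f)) (lpN p v) ≠ ∞) :
    ∃ g : ℝ → ℝ≥0∞, Measurable g ∧ lpN p v g ≤ 1 ∧
      leastC (fun f => lpN q w (calHsd k t f)) (lpN p v) / 2 ≤ lpN q w (calHsd k t g) := by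
  set N := leastC (fun f => lpN q w (calHsd k t f)) (lpN p v) with hNdef
  by_cases h0 : N = 0
  · refine ⟨fun _ => 0, measurable_const, ?_, ?_⟩
    · unfold lpN; simp [hp]
    · rw [h0]; simp
  have hlt : N / 2 < N := ENNReal.half_lt_self h0 hN
  have : ∃ f, Measurable f ∧ lpN p v f ≠ ∞ ∧ N / 2 * lpN p v f < lpN q w (calHsd k t f) := by
    by_contra hne
    push Not at hne
    exact absurd (leastC_le' (C := N / 2) (Φ := fun f => lpN q w (calHsd k t f)) hne)
      (not_le.mpr hlt)
  obtain ⟨f, hf, hft, hfl⟩ := this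
  have hf0 : lpN p v f ≠ 0 := by
    intro hz
    have := le_leastC' (Φ := fun f => lpN q w (calHsd k t f)) hN hf hft
    rw [hz, mul_zero] at this
    exact absurd hfl (not_lt.mpr (this.trans bot_le))
  have hc : (lpN p v f)⁻¹ ≠ ∞ := by simpa using hf0
  refine ⟨fun z => (lpN p v f)⁻¹ * f z, hf.const_mul _, ?_, ?_⟩
  · rw [lpN_smul hp _ hc, ENNReal.inv_mul_cancel hf0 hft]
  · rw [lpN_calHsd_smul hq _ _ hc, mul_comm, ← div_eq_mul_inv,
      ENNReal.le_div_iff_mul_le (Or.inl hf0) (Or.inl hft)]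
    exact hfl.le

theorem lower_sum {p q r s : ℝ} (hp : 0 < p) (hq : 0 < q) (hr : 0 < r) (hs : 0 < s)
    (hrs : r / s + r / p = 1)
    {u v w : ℝ → ℝ≥0∞} {k : ℝ → ℝ → ℝ≥0∞} (hu : Measurable u) (hv : Measurable v)
    (hU : ∀ t : ℝ, 0 < t → intFrom t u ≠ 0 ∧ intFrom t u ≠ ∞)
    (hC : CSc p r q u v w k ≠ ∞) (F : Finset ℤ) (y : ℤ → ℝ) (hy : Antitone y)
    (hyF : ∀ n ∈ F, 0 < y n) (hyU : ∀ n ∈ F, intFrom (y n) u = 2 * intFrom (y (n-1)) u) :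
    ∑ n ∈ F, intFrom (y n) u ^ (s/r) *
      leastC (fun f => lpN q w (calHsd k (y n) f)) (lpN p v) ^ s ≤
      ((2 * 2 ^ r) * CSc p r q u v w k ^ r) ^ (s/r) := by
  set N : ℤ → ℝ≥0∞ := fun n => leastC (fun f => lpN q w (calHsd k (y n) f)) (lpN p v) with hN
  set C := CSc p r q u v w k with hCdef
  have hNfin : ∀ n ∈ F, N n ≠ ∞ := by
    intro n hn hbad
    have h1 := lower_Hsd (p := p) (v := v) (w := w) (k := k) hq hr hu hU (hyF n hn)
    change _ * N n ≤ _ at h1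
    rw [hbad, ENNReal.mul_top] at h1
    · exact hC (top_le_iff.mp h1)
    · simp [ENNReal.rpow_eq_zero_iff, (hU _ (hyF n hn)).1, (hU _ (hyF n hn)).2]
  have hg : ∀ n : ℤ, ∃ g : ℝ → ℝ≥0∞, n ∈ F → Measurable g ∧ lpN p v g ≤ 1 ∧
      N n / 2 ≤ lpN q w (calHsd k (y n) g) := by
    intro n
    by_cases hn : n ∈ F
    · obtain ⟨g, hg⟩ := near_extremal hp hq (y n) (hNfin n hn)
      exact ⟨g, fun _ => hg⟩
    · exact ⟨fun _ => 0, fun h => absurd h hn⟩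
  choose g hg using hg
  set b : ℤ → ℝ≥0∞ := fun n => intFrom (y n) u ^ (s/r) * N n ^ s with hb
  have hbfin : ∀ n ∈ F, b n ≠ ∞ := by
    intro n hn
    refine ENNReal.mul_ne_top (ENNReal.rpow_ne_top_of_nonneg (by positivity) ?_)
      (ENNReal.rpow_ne_top_of_nonneg hs.le (hNfin n hn))
    exact (hU _ (hyF n hn)).2
  set T := ∑ n ∈ F, b n with hT
  have hTfin : T ≠ ∞ := ENNReal.sum_ne_top.mpr hbfin
  change T ≤ _
  set f : ℝ → ℝ≥0∞ := fun z => (∑ n ∈ F, b n * g n z ^ p) ^ (1/p) with hf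
  have hfm : Measurable f :=
    (Finset.measurable_fun_sum F fun n hn => ((hg n hn).1.pow_const p).const_mul _).pow_const _
  have hfp : lpN p v f ≤ T ^ (1/p) := by
    unfold lpN
    refine ENNReal.rpow_le_rpow ?_ (by positivity)
    have e : ∀ x, f x ^ p * v x = ∑ n ∈ F, b n * (g n x ^ p * v x) := by
      intro x
      simp only [hf]
      rw [← ENNReal.rpow_mul, one_div_mul_cancel hp.ne', ENNReal.rpow_one, Finset.sum_mul]
      exact Finset.sum_congr rfl fun n _ => mul_assoc _ _ _
    simp_rw [e]
    rw [lintegral_finsetSum' (f := fun n x => b n * (g n x ^ p * v x)) _ fun n hn =>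
      ((((hg n hn).1.pow_const p).mul hv).const_mul _).aemeasurable]
    refine Finset.sum_le_sum fun n hn => ?_
    rw [lintegral_const_mul' _ _ (hbfin n hn)]
    have h1 := (hg n hn).2.1
    unfold lpN at h1
    have h2 : ∫⁻ x in Ioi (0:ℝ), g n x ^ p * v x ≤ 1 := by
      have := ENNReal.rpow_le_rpow h1 hp.le
      rwa [← ENNReal.rpow_mul, one_div_mul_cancel hp.ne', ENNReal.rpow_one,
        ENNReal.one_rpow] at this
    calc b n * _ ≤ b n * 1 := mul_le_mul' le_rfl h2
      _ = b n := mul_one _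
  have hfpt : lpN p v f ≠ ∞ :=
    ne_top_of_le_ne_top (ENNReal.rpow_ne_top_of_nonneg (by positivity) hTfin) hfp
  have hmain : lpN r u (opSc q w k f) ≤ C * T ^ (1/p) :=
    (le_leastC' (Φ := fun f => lpN r u (opSc q w k f)) hC hfm hfpt).trans
      (mul_le_mul' le_rfl hfp)
  have hmain2 : ∫⁻ x in Ioi (0:ℝ), opSc q w k f x ^ r * u x ≤ C ^ r * T ^ (r/p) := by
    have := ENNReal.rpow_le_rpow hmain hr.le
    unfold lpN at this
    rw [← ENNReal.rpow_mul, one_div_mul_cancel hr.ne', ENNReal.rpow_one,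
      ENNReal.mul_rpow_of_nonneg _ _ hr.le, ← ENNReal.rpow_mul] at this
    rwa [show 1 / p * r = r / p by ring] at this
  -- lower estimate on blocks
  have hblock : ∀ n ∈ F, b n ≤ (2 * 2 ^ r) *
      ∫⁻ x in Ioc (y n) (y (n-1)), opSc q w k f x ^ r * u x := by
    intro n hn
    have hyn := hyF n hn
    have hyn1 : y n ≤ y (n-1) := hy (by lia)
    set m := ∫⁻ x in Ioc (y n) (y (n-1)), u x with hm
    have hm1 : intFrom (y n) u ≤ 2 * m := by
      have h1 : intFrom (y n) u ≤ m + intFrom (y (n-1)) u := by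
        unfold intFrom
        rw [← Ioc_union_Ioi_eq_Ioi hyn1]
        exact lintegral_union_le _ _ _
      have h3 := hyU n hn
      have hfin := (hU _ (hyn.trans_le hyn1)).2
      rw [h3, two_mul] at h1
      have h4 := (ENNReal.add_le_add_iff_right hfin).mp h1
      rw [h3]; gcongr
    have hlow : b n ^ (1/p) * (N n / 2) ≤ opSc q w k f (y n) := by
      have hbp : b n ^ (1/p) ≠ ∞ := ENNReal.rpow_ne_top_of_nonneg (by positivity) (hbfin n hn)
      have h1 : b n ^ (1/p) * (N n / 2) ≤
          lpN q w (calHsd k (y n) (fun z => b n ^ (1/p) * g n z)) := by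
        rw [lpN_calHsd_smul hq _ _ hbp]
        exact mul_le_mul' le_rfl (hg n hn).2.2
      refine h1.trans ?_
      rw [lpN_calHsd hq, opSc_eq]
      refine ENNReal.rpow_le_rpow (lintegral_mono fun x => ?_) (by positivity)
      refine mul_le_mul' le_rfl (ENNReal.rpow_le_rpow (lintegral_mono fun z => ?_) hq.le)
      refine mul_le_mul' le_rfl ?_
      simp only [hf]
      have e : ∀ β γ : ℝ≥0∞, β ^ (1/p) * γ = (β * γ ^ p) ^ (1/p) := by
        intro β γ
        rw [ENNReal.mul_rpow_of_nonneg _ _ (by positivity), ← ENNReal.rpow_mul,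
          mul_one_div_cancel hp.ne', ENNReal.rpow_one]
      rw [e]
      refine ENNReal.rpow_le_rpow ?_ (by positivity)
      exact Finset.single_le_sum (f := fun n => b n * g n z ^ p) (fun _ _ => bot_le) hn
    have hBd : (b n ^ (1/p) * (N n / 2)) ^ r * m ≤
        ∫⁻ x in Ioc (y n) (y (n-1)), opSc q w k f x ^ r * u x := by
      rw [hm, ← lintegral_const_mul _ hu]
      refine setLIntegral_mono' measurableSet_Ioc ?_
      intro x hx
      refine mul_le_mul' (ENNReal.rpow_le_rpow (hlow.trans ?_) hr.le) le_rfl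
      exact ENNReal.rpow_le_rpow (intTo_mono_right _ hx.1.le) (by positivity)
    have hbe : b n = b n ^ (r/p) * N n ^ r * intFrom (y n) u := by
      have h1 : b n ^ (r/s) = intFrom (y n) u * N n ^ r := by
        simp only [hb]
        rw [ENNReal.mul_rpow_of_nonneg _ _ (by positivity), ← ENNReal.rpow_mul,
          ← ENNReal.rpow_mul, show s / r * (r / s) = 1 by field_simp,
          show s * (r / s) = r by field_simp, ENNReal.rpow_one]
      calc b n = b n ^ (r/s + r/p) := by rw [hrs, ENNReal.rpow_one]
        _ = b n ^ (r/s) * b n ^ (r/p) :=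
          ENNReal.rpow_add_of_nonneg _ _ (by positivity) (by positivity)
        _ = _ := by rw [h1]; ring
    calc b n = b n ^ (r/p) * N n ^ r * intFrom (y n) u := hbe
      _ ≤ b n ^ (r/p) * N n ^ r * (2 * m) := mul_le_mul' le_rfl hm1
      _ = (2 * 2 ^ r) * ((b n ^ (1/p) * (N n / 2)) ^ r * m) := by
          have h2 : N n ^ r = 2 ^ r * (N n / 2) ^ r := by
            rw [← ENNReal.mul_rpow_of_nonneg _ _ hr.le,
              ENNReal.mul_div_cancel (by simp) (by simp)]
          rw [ENNReal.mul_rpow_of_nonneg _ _ hr.le, ← ENNReal.rpow_mul,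
            show 1 / p * r = r / p by ring, h2]
          ring
      _ ≤ _ := mul_le_mul' le_rfl hBd
  have hdisj : Set.PairwiseDisjoint (F : Set ℤ) (fun n => Ioc (y n) (y (n-1))) := by
    have key : ∀ i j : ℤ, i < j → Disjoint (Ioc (y i) (y (i-1))) (Ioc (y j) (y (j-1))) := by
      intro i j hij
      rw [Set.disjoint_left]
      intro x hx hx'
      have : y (j-1) ≤ y i := hy (by lia)
      exact absurd (hx.1.trans_le (hx'.2.trans this)) (lt_irrefl _)
    intro i _ j _ hij
    rcases lt_or_gt_of_ne hij with h | h
    · exact key i j h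
    · exact (key j i h).symm
  have hsum : T ≤ (2 * 2 ^ r) * (C ^ r * T ^ (r/p)) := by
    calc T ≤ ∑ n ∈ F, (2 * 2 ^ r) *
          ∫⁻ x in Ioc (y n) (y (n-1)), opSc q w k f x ^ r * u x := Finset.sum_le_sum hblock
      _ = (2 * 2 ^ r) * ∫⁻ x in ⋃ n ∈ F, Ioc (y n) (y (n-1)), opSc q w k f x ^ r * u x := by
          rw [← Finset.mul_sum, lintegral_biUnion_finset hdisj fun _ _ => measurableSet_Ioc]
      _ ≤ (2 * 2 ^ r) * ∫⁻ x in Ioi (0:ℝ), opSc q w k f x ^ r * u x := by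
          refine mul_le_mul' le_rfl (lintegral_mono_set ?_)
          refine iUnion₂_subset fun n hn x hx => ?_
          exact (hyF n hn).trans hx.1
      _ ≤ _ := mul_le_mul' le_rfl hmain2
  by_cases hT0 : T = 0
  · rw [hT0]; exact bot_le
  have hTp0 : T ^ (r/p) ≠ 0 := by
    simp [ENNReal.rpow_eq_zero_iff, hT0, hTfin]
  have hTpt : T ^ (r/p) ≠ ∞ := ENNReal.rpow_ne_top_of_nonneg (by positivity) hTfin
  have hfinal : T ^ (r/s) ≤ (2 * 2 ^ r) * C ^ r := by
    have h1 : T = T ^ (r/s) * T ^ (r/p) := by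
      rw [← ENNReal.rpow_add_of_nonneg _ _ (by positivity) (by positivity), hrs,
        ENNReal.rpow_one]
    have h2 : T ^ (r/s) * T ^ (r/p) ≤ ((2 * 2 ^ r) * C ^ r) * T ^ (r/p) := by
      rw [← h1, mul_assoc]; exact hsum
    exact (ENNReal.mul_le_mul_iff_left hTp0 hTpt).mp h2
  calc T = (T ^ (r/s)) ^ (s/r) := by
        rw [← ENNReal.rpow_mul, show r / s * (s / r) = 1 by field_simp, ENNReal.rpow_one]
    _ ≤ _ := ENNReal.rpow_le_rpow hfinal (by positivity)


theorem lpN_mono {q : ℝ} (hq : 0 < q) {w f g : ℝ → ℝ≥0∞} (h : ∀ x, f x ≤ g x) :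
    lpN q w f ≤ lpN q w g := by
  unfold lpN
  refine ENNReal.rpow_le_rpow (lintegral_mono fun x => ?_) (by positivity)
  exact mul_le_mul' (ENNReal.rpow_le_rpow (h x) hq.le) le_rfl

theorem Hscd_le_Hsd {p q : ℝ} (hq : 0 < q) {u v w : ℝ → ℝ≥0∞} {k : ℝ → ℝ → ℝ≥0∞} {c d d' : ℝ}
    (hc : 0 ≤ c) (hd : d ≤ d') :
    leastC (fun f => lpN q w (calHscd u k c d f)) (lpN p v) ≤
      leastC (fun f => lpN q w (calHsd k d' f)) (lpN p v) := by
  rw [← one_mul (leastC (fun f => lpN q w (calHsd k d' f)) (lpN p v))]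
  refine leastC_mono' one_ne_zero ?_
  intro f _ _
  rw [one_mul]
  refine lpN_mono hq fun x => ?_
  unfold calHscd calHsd
  by_cases h : c < x ∧ x ≤ d
  · rw [if_pos h, if_pos ⟨hc.trans_lt h.1, h.2.trans hd⟩]
    exact lintegral_mono_set (Ioo_subset_Ioo_left (ztInv_nonneg u c))
  · rw [if_neg h]; exact bot_le

theorem two_zpow_ne_zero (n : ℤ) : (2:ℝ≥0∞) ^ n ≠ 0 := (ENNReal.zpow_pos (by simp) (by simp) n).ne'
theorem two_zpow_ne_top (n : ℤ) : (2:ℝ≥0∞) ^ n ≠ ∞ := (ENNReal.zpow_lt_top (by simp) (by simp) n).ne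
theorem two_zpow_succ (n : ℤ) : (2:ℝ≥0∞) ^ (n+1) = 2 * 2 ^ n := by
  rw [ENNReal.zpow_add (by simp) (by simp), zpow_one, mul_comm]

theorem lower_A2_int {p q r s : ℝ} (hp : 0 < p) (hq : 0 < q) (hr : 0 < r) (hs : 0 < s)
    (hrs : r / s + r / p = 1)
    {u v w : ℝ → ℝ≥0∞} {k : ℝ → ℝ → ℝ≥0∞} (hu : Measurable u) (hv : Measurable v)
    (hU : ∀ t : ℝ, 0 < t → intFrom t u ≠ 0 ∧ intFrom t u ≠ ∞)
    (hC : CSc p r q u v w k ≠ ∞) :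
    ∫⁻ x in Ioi (0:ℝ), u x * (intFrom x u) ^ (s / p) *
        leastC (fun f => lpN q w (calHscd u k (ztInv u x) (zt u x) f)) (lpN p v) ^ s ≤
      4 ^ (s/r) * ((2 * 2 ^ r) * CSc p r q u v w k ^ r) ^ (s/r) := by
  set C := CSc p r q u v w k with hCdef
  set y : ℤ → ℝ := fun n => Zt u ((2:ℝ≥0∞) ^ (n-1)) with hydef
  set N : ℤ → ℝ≥0∞ := fun n => leastC (fun f => lpN q w (calHsd k (y n) f)) (lpN p v) with hN
  set B : ℤ → Set ℝ := fun n => {x | 0 < x ∧ (2:ℝ≥0∞) ^ n ≤ intFrom x u ∧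
    intFrom x u < (2:ℝ≥0∞) ^ (n+1)} with hB
  have hy : Antitone y := by
    intro i j hij
    exact Zt_anti u hU (two_zpow_ne_zero _)
      (ENNReal.zpow_le_of_le (by norm_num) (by lia))
  have hyU : ∀ n, 0 < y n → intFrom (y n) u = (2:ℝ≥0∞) ^ (n-1) := fun n hn =>
    le_antisymm (intFrom_Zt_le u hU (two_zpow_ne_zero _)) (le_intFrom_Zt u hU hn)
  have hBm : ∀ n, MeasurableSet (B n) := by
    intro n
    have hm : Measurable fun x => intFrom x u :=
      (show Antitone fun x => intFrom x u from fun a b h => intFrom_anti u h).measurable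
    exact measurableSet_Ioi.inter ((measurableSet_le measurable_const hm).inter
      (measurableSet_lt hm measurable_const))
  have hzty : ∀ n, ∀ x ∈ B n, zt u x ≤ y n := by
    intro n x hx
    rw [zt_eq]
    refine Zt_anti u hU (two_zpow_ne_zero _) ?_
    rw [ENNReal.le_div_iff_mul_le (by simp) (by simp), mul_comm, ← two_zpow_succ]
    simpa using hx.2.1
  have hBpos : ∀ n, ∀ x ∈ B n, 0 < y n := fun n x hx =>
    (hx.1.trans_le (le_zt u hU hx.1)).trans_le (hzty n x hx)
  have hcover : Ioi (0:ℝ) ⊆ ⋃ n, B n := by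
    intro x hx
    obtain ⟨n, hn⟩ := ENNReal.exists_mem_Ico_zpow (hU x hx).1 (hU x hx).2
      (y := 2) (by norm_num) (by simp)
    exact mem_iUnion.mpr ⟨n, hx, hn.1, hn.2⟩
  set b : ℤ → ℝ≥0∞ := fun n => if 0 < y n then intFrom (y n) u ^ (s/r) * N n ^ s else 0 with hb
  have hBint : ∀ n, ∫⁻ x in B n, u x * (intFrom x u) ^ (s / p) *
        leastC (fun f => lpN q w (calHscd u k (ztInv u x) (zt u x) f)) (lpN p v) ^ s ≤
        4 ^ (s/r) * b n := by
    intro n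
    rcases (B n).eq_empty_or_nonempty with he | ⟨x0, hx0⟩
    · rw [he]; simp
    have hyn := hBpos n x0 hx0
    set t := (2:ℝ≥0∞) ^ (n+1) with ht
    have ht4 : t = 4 * intFrom (y n) u := by
      rw [hyU n hyn, ht, two_zpow_succ, ← sub_add_cancel n 1, two_zpow_succ, ← mul_assoc]
      simp; norm_num
    have hmeasB : ∫⁻ x in B n, u x ≤ t := by
      rw [← withDensity_apply _ (hBm n)]
      exact meas_level_le u (fun x hx => hx.1) fun x hx => hx.2.2.le
    calc _ ≤ ∫⁻ x in B n, u x * (t ^ (s/p) * N n ^ s) := by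
          refine setLIntegral_mono' (hBm n) fun x hx => ?_
          rw [mul_assoc]
          refine mul_le_mul' le_rfl (mul_le_mul' ?_ ?_)
          · exact ENNReal.rpow_le_rpow hx.2.2.le (by positivity)
          · exact ENNReal.rpow_le_rpow
              (Hscd_le_Hsd hq (ztInv_nonneg u x) (hzty n x hx)) hs.le
      _ = (∫⁻ x in B n, u x) * (t ^ (s/p) * N n ^ s) := lintegral_mul_const _ hu
      _ ≤ t * (t ^ (s/p) * N n ^ s) := mul_le_mul' hmeasB le_rfl
      _ = t ^ (s/r) * N n ^ s := by
          rw [← mul_assoc]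
          congr 1
          have : s / r = 1 + s / p := by
            field_simp at hrs ⊢
            linarith
          rw [this, ENNReal.rpow_add_of_nonneg _ _ zero_le_one (by positivity), ENNReal.rpow_one]
      _ = 4 ^ (s/r) * b n := by
          simp only [hb]
          rw [if_pos hyn, ht4, ENNReal.mul_rpow_of_nonneg _ _ (by positivity), mul_assoc]
  calc _ ≤ ∫⁻ x in ⋃ n, B n, u x * (intFrom x u) ^ (s / p) *
        leastC (fun f => lpN q w (calHscd u k (ztInv u x) (zt u x) f)) (lpN p v) ^ s :=
        lintegral_mono_set hcover
    _ ≤ ∑' n, ∫⁻ x in B n, u x * (intFrom x u) ^ (s / p) *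
        leastC (fun f => lpN q w (calHscd u k (ztInv u x) (zt u x) f)) (lpN p v) ^ s :=
        lintegral_iUnion_le _ _
    _ ≤ ∑' n, 4 ^ (s/r) * b n := ENNReal.tsum_le_tsum hBint
    _ = 4 ^ (s/r) * ∑' n, b n := ENNReal.tsum_mul_left
    _ ≤ _ := by
        refine mul_le_mul' le_rfl ?_
        rw [ENNReal.tsum_eq_iSup_sum]
        refine iSup_le fun F => ?_
        simp only [hb]
        rw [← Finset.sum_filter]
        refine lower_sum hp hq hr hs hrs hu hv hU hC (F.filter fun n => 0 < y n) y hy ?_ ?_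
        · intro n hn; exact (Finset.mem_filter.mp hn).2
        · intro n hn
          have hn := (Finset.mem_filter.mp hn).2
          have hn1 : 0 < y (n-1) := hn.trans_le (hy (by lia))
          rw [hyU n hn, hyU _ hn1, ← two_zpow_succ]
          congr 1; lia

theorem lower_A2 {p q r : ℝ} (hp : 0 < p) (hq : 0 < q) (hr : 0 < r)
    {u v w : ℝ → ℝ≥0∞} {k : ℝ → ℝ → ℝ≥0∞} (hu : Measurable u) (hv : Measurable v)
    (hU : ∀ t : ℝ, 0 < t → intFrom t u ≠ 0 ∧ intFrom t u ≠ ∞) :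
    bfA2 p r q u v w k ≤ (1 + (4 * (2 * 2 ^ r)) ^ (1/r)) * CSc p r q u v w k := by
  by_cases hC : CSc p r q u v w k = ∞
  · rw [hC, ENNReal.mul_top (by simp)]; exact le_top
  unfold bfA2
  split_ifs with hpr
  · refine iSup₂_le fun t ht => ?_
    refine (lower_Hsd hq hr hu hU ht).trans ?_
    rw [add_mul, one_mul]; exact le_self_add
  · have hlt : r < p := not_le.mp hpr
    have he : 0 < 1/r - 1/p := by
      have := one_div_lt_one_div_of_lt hr hlt
      linarith
    set s := (1/r - 1/p)⁻¹ with hs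
    have hs0 : 0 < s := inv_pos.mpr he
    have hes : 1/r - 1/p = 1/s := by rw [hs]; simp
    have hrs : r / s + r / p = 1 := by
      have : r / s = r * (1/s) := by ring
      rw [this, ← hes]; field_simp; ring
    rw [hes]
    refine (ENNReal.rpow_le_rpow (lower_A2_int hp hq hr hs0 hrs hu hv hU hC)
      (by positivity)).trans ?_
    rw [← ENNReal.mul_rpow_of_nonneg _ _ (by positivity), ← ENNReal.rpow_mul,
      show s / r * (1/s) = 1/r by field_simp, ← mul_assoc,
      ENNReal.mul_rpow_of_nonneg _ _ (by positivity), ← ENNReal.rpow_mul,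
      mul_one_div_cancel hr.ne', ENNReal.rpow_one, add_mul]
    exact le_add_self


instance nuM_sfinite (u : ℝ → ℝ≥0∞) : SFinite (nuM u) := by
  unfold nuM; infer_instance

theorem ae_pos_nuM (u : ℝ → ℝ≥0∞) : ∀ᵐ x ∂(nuM u), 0 < x :=
  ae_restrict_mem measurableSet_Ioi

theorem measurable_intFrom (u : ℝ → ℝ≥0∞) : Measurable fun x => intFrom x u :=
  (show Antitone fun x => intFrom x u from fun _ _ h => intFrom_anti u h).measurable

theorem add3_rpow {a : ℝ} (ha : 0 < a) (x y z : ℝ≥0∞) :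
    (x + y + z) ^ a ≤ 3 ^ a * (x ^ a + y ^ a + z ^ a) := by
  have h : x + y + z ≤ 3 * max (max x y) z := by
    have h1 : x ≤ max (max x y) z := (le_max_left _ _).trans (le_max_left _ _)
    have h2 : y ≤ max (max x y) z := (le_max_right _ _).trans (le_max_left _ _)
    have h3 : z ≤ max (max x y) z := le_max_right _ _
    calc x + y + z ≤ max (max x y) z + max (max x y) z + max (max x y) z := by gcongr
      _ = 3 * max (max x y) z := by ring
  refine (ENNReal.rpow_le_rpow h ha.le).trans ?_
  rw [ENNReal.mul_rpow_of_nonneg _ _ ha.le]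
  refine mul_le_mul' le_rfl ?_
  rcases max_choice (max x y) z with h | h <;> rw [h]
  · rcases max_choice x y with h | h <;> rw [h]
    · rw [add_assoc]; exact le_self_add
    · exact le_add_self.trans le_self_add
  · exact le_add_self

/-- the local part. -/
def Gloc (q : ℝ) (u w : ℝ → ℝ≥0∞) (k : ℝ → ℝ → ℝ≥0∞) (f : ℝ → ℝ≥0∞) (x : ℝ) : ℝ≥0∞ :=
  intIoo (ztInv u x) x (fun y => w y * (intIoo (ztInv2 u x) y (fun z => k y z * f z)) ^ q)

theorem measurable_Gloc {q : ℝ} {u w : ℝ → ℝ≥0∞} {k : ℝ → ℝ → ℝ≥0∞} {f : ℝ → ℝ≥0∞}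
    (hU : ∀ t : ℝ, 0 < t → intFrom t u ≠ 0 ∧ intFrom t u ≠ ∞)
    (hw : Measurable w) (hk : Measurable (Function.uncurry k)) (hf : Measurable f) :
    Measurable (Gloc q u w k f) := by
  refine measurable_var_intIoo (ztInv_mono u hU).measurable measurable_id
    (h := fun x y => w y * (intIoo (ztInv2 u x) y (fun z => k y z * f z)) ^ q) ?_
  refine (hw.comp measurable_snd).mul (Measurable.pow_const ?_ q)
  refine measurable_var_intIoo (X := ℝ × ℝ) (c := fun a => ztInv2 u a.1) (d := fun a => a.2)
    (h := fun a z => k a.2 z * f z) ((ztInv2_mono u hU).measurable.comp measurable_fst)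
    measurable_snd ?_
  exact (hk.comp ((measurable_snd.comp measurable_fst).prodMk measurable_snd)).mul
    (hf.comp measurable_snd)

theorem Vop_upper {k : ℝ → ℝ → ℝ≥0∞} {D : ℝ≥0∞} (hD1 : 1 ≤ D) (hD : D ≠ ∞)
    (hk : Measurable (Function.uncurry k))
    (hO : Oinarov k D) {f : ℝ → ℝ≥0∞} (hf : Measurable f) {c y : ℝ} (hcy : c < y) :
    Vop k f y ≤ D * (Vop k f c + k y c * intTo c f + intIoo c y (fun z => k y z * f z)) := by
  have h1 : intTo c (fun z => k y z * f z) ≤ D * (Vop k f c + k y c * intTo c f) := by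
    unfold Vop intTo
    have hkc : Measurable fun z => k c z * f z :=
      (hk.comp (measurable_const.prodMk measurable_id)).mul hf
    rw [← lintegral_const_mul _ hf, ← lintegral_add_left hkc, ← lintegral_const_mul' _ _ hD]
    refine setLIntegral_mono' measurableSet_Ioo ?_
    intro z hz
    calc k y z * f z ≤ D * (k y c + k c z) * f z :=
          mul_le_mul' (hO.2 y c z hz.1.le hz.2.le hcy.le).2 le_rfl
      _ = _ := by ring
  calc Vop k f y ≤ intTo c (fun z => k y z * f z) + intIoo c y (fun z => k y z * f z) :=
        intTo_split _ _ _
    _ ≤ D * (Vop k f c + k y c * intTo c f) + D * intIoo c y (fun z => k y z * f z) := by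
        refine add_le_add h1 ?_
        exact le_mul_of_one_le_left' hD1
    _ = _ := by ring

theorem upper_pt {q : ℝ} (hq : 0 < q) {D : ℝ≥0∞} (hD1 : 1 ≤ D) (hD : D ≠ ∞)
    {u w : ℝ → ℝ≥0∞} {k : ℝ → ℝ → ℝ≥0∞} (hw : Measurable w)
    (hU : ∀ t : ℝ, 0 < t → intFrom t u ≠ 0 ∧ intFrom t u ≠ ∞)
    (hk : Measurable (Function.uncurry k))
    (hO : Oinarov k D) {f : ℝ → ℝ≥0∞} (hf : Measurable f) (x : ℝ) :
    intIoo (ztInv u x) x (fun y => w y * Vop k f y ^ q) ≤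
      (D ^ q * 3 ^ q) * (intIoo (ztInv2 u x) x w * Vop k f (ztInv2 u x) ^ q +
        intIoo (ztInv2 u x) x (fun y => w y * k y (ztInv2 u x) ^ q) *
          intTo (ztInv2 u x) f ^ q + Gloc q u w k f x) := by
  set c := ztInv2 u x with hc
  have hcz : c ≤ ztInv u x := ztInv2_le u hU x
  have hkc : Measurable fun y => k y c := hk.comp (measurable_id.prodMk measurable_const)
  have hwk : Measurable fun y => w y * k y c ^ q := hw.mul (hkc.pow_const q)
  have hKt : D ^ q * 3 ^ q ≠ ∞ := ENNReal.mul_ne_top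
    (ENNReal.rpow_ne_top_of_nonneg hq.le hD) (ENNReal.rpow_ne_top_of_nonneg hq.le (by simp))
  have hsub : Ioo (ztInv u x) x ⊆ Ioo c x := Ioo_subset_Ioo_left hcz
  calc intIoo (ztInv u x) x (fun y => w y * Vop k f y ^ q)
      ≤ ∫⁻ y in Ioo (ztInv u x) x, (D ^ q * 3 ^ q) *
        (w y * Vop k f c ^ q + w y * k y c ^ q * intTo c f ^ q +
          w y * (intIoo c y (fun z => k y z * f z)) ^ q) := by
        refine setLIntegral_mono' measurableSet_Ioo ?_
        intro y hy
        have h1 := Vop_upper hD1 hD hk hO hf (hcz.trans_lt hy.1)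
        have h2 := ENNReal.rpow_le_rpow h1 hq.le
        rw [ENNReal.mul_rpow_of_nonneg _ _ hq.le] at h2
        have h3 := h2.trans (mul_le_mul' le_rfl (add3_rpow hq _ _ _))
        refine (mul_le_mul' le_rfl h3).trans (le_of_eq ?_)
        rw [ENNReal.mul_rpow_of_nonneg _ _ hq.le]
        ring
    _ = (D ^ q * 3 ^ q) * ((∫⁻ y in Ioo (ztInv u x) x, w y) * Vop k f c ^ q +
          (∫⁻ y in Ioo (ztInv u x) x, w y * k y c ^ q) * intTo c f ^ q +
          Gloc q u w k f x) := by
        have hm : Measurable fun y => w y * Vop k f c ^ q + w y * k y c ^ q * intTo c f ^ q :=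
          (hw.mul_const _).add (hwk.mul_const _)
        rw [lintegral_const_mul' _ _ hKt, lintegral_add_left hm, lintegral_add_left (hw.mul_const _),
          lintegral_mul_const _ hw, lintegral_mul_const _ hwk]
        rfl
    _ ≤ _ := by
        refine mul_le_mul' le_rfl (add_le_add (add_le_add ?_ ?_) le_rfl)
        · exact mul_le_mul' (lintegral_mono_set hsub) le_rfl
        · exact mul_le_mul' (lintegral_mono_set hsub) le_rfl

theorem upper_split {q r : ℝ} (hq : 0 < q) (hr : 0 < r) {D : ℝ≥0∞} (hD1 : 1 ≤ D) (hD : D ≠ ∞)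
    {u w : ℝ → ℝ≥0∞} {k : ℝ → ℝ → ℝ≥0∞} (hu : Measurable u) (hw : Measurable w)
    (hU : ∀ t : ℝ, 0 < t → intFrom t u ≠ 0 ∧ intFrom t u ≠ ∞)
    (hk : Measurable (Function.uncurry k))
    (hO : Oinarov k D) {f : ℝ → ℝ≥0∞} (hf : Measurable f) :
    ∫⁻ x, (intIoo (ztInv u x) x (fun y => w y * Vop k f y ^ q)) ^ (r/q) ∂(nuM u) ≤
      ((D ^ q * 3 ^ q) ^ (r/q) * 3 ^ (r/q)) *
      ((∫⁻ x in Ioi (0:ℝ), u x * (intIoo (ztInv2 u x) x w) ^ (r/q) *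
        (intTo (ztInv2 u x) (fun z => k (ztInv2 u x) z * f z)) ^ r) +
       (∫⁻ x in Ioi (0:ℝ),
      u x * (intIoo (ztInv2 u x) x (fun y => w y * k y (ztInv2 u x) ^ q)) ^ (r/q) *
        (intTo (ztInv2 u x) f) ^ r) +
       ∫⁻ x, Gloc q u w k f x ^ (r/q) ∂(nuM u)) := by
  have hrq : 0 < r/q := by positivity
  have hcm := (ztInv2_mono u hU).measurable
  set a0 : ℝ → ℝ≥0∞ := fun x => (intIoo (ztInv2 u x) x w) ^ (r/q) *
        (intTo (ztInv2 u x) (fun z => k (ztInv2 u x) z * f z)) ^ r with ha0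
  set a1 : ℝ → ℝ≥0∞ := fun x =>
    (intIoo (ztInv2 u x) x (fun y => w y * k y (ztInv2 u x) ^ q)) ^ (r/q) *
        (intTo (ztInv2 u x) f) ^ r with ha1
  have hm0 : Measurable a0 := by
    refine Measurable.mul (Measurable.pow_const ?_ _) (Measurable.pow_const ?_ _)
    · exact measurable_var_intIoo (h := fun _ => w) hcm measurable_id (hw.comp measurable_snd)
    · exact (measurable_Vop hk hf).comp hcm
  have hm1 : Measurable a1 := by
    refine Measurable.mul (Measurable.pow_const ?_ _) (Measurable.pow_const ?_ _)
    · refine measurable_var_intIoo (h := fun x y => w y * k y (ztInv2 u x) ^ q)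
        hcm measurable_id ?_
      exact (hw.comp measurable_snd).mul
        ((hk.comp (measurable_snd.prodMk (hcm.comp measurable_fst))).pow_const q)
    · exact (intTo_mono_right f).measurable.comp hcm
  have e0 : (∫⁻ x in Ioi (0:ℝ), u x * (intIoo (ztInv2 u x) x w) ^ (r/q) *
        (intTo (ztInv2 u x) (fun z => k (ztInv2 u x) z * f z)) ^ r) = ∫⁻ x, a0 x ∂(nuM u) := by
    rw [lintegral_nuM hu hm0]
    simp only [ha0, mul_assoc]
  have e1 : (∫⁻ x in Ioi (0:ℝ),
      u x * (intIoo (ztInv2 u x) x (fun y => w y * k y (ztInv2 u x) ^ q)) ^ (r/q) *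
        (intTo (ztInv2 u x) f) ^ r) = ∫⁻ x, a1 x ∂(nuM u) := by
    rw [lintegral_nuM hu hm1]
    simp only [ha1, mul_assoc]
  have hKt : (D ^ q * 3 ^ q) ^ (r/q) * 3 ^ (r/q) ≠ ∞ :=
    ENNReal.mul_ne_top (ENNReal.rpow_ne_top_of_nonneg hrq.le (ENNReal.mul_ne_top
      (ENNReal.rpow_ne_top_of_nonneg hq.le hD) (ENNReal.rpow_ne_top_of_nonneg hq.le (by simp))))
      (ENNReal.rpow_ne_top_of_nonneg hrq.le (by simp))
  have hm01 : Measurable fun x => a0 x + a1 x := hm0.add hm1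
  rw [e0, e1, ← lintegral_add_left hm0, ← lintegral_add_left hm01,
    ← lintegral_const_mul' _ _ hKt]
  refine lintegral_mono fun x => ?_
  refine (ENNReal.rpow_le_rpow (upper_pt hq hD1 hD hw hU hk hO hf x) hrq.le).trans ?_
  rw [ENNReal.mul_rpow_of_nonneg _ _ hrq.le]
  refine (mul_le_mul' le_rfl (add3_rpow hrq _ _ _)).trans (le_of_eq ?_)
  have eq1 : ∀ X : ℝ≥0∞, (X ^ q) ^ (r/q) = X ^ r := by
    intro X
    rw [← ENNReal.rpow_mul]; congr 1; field_simp
  rw [ENNReal.mul_rpow_of_nonneg _ _ hrq.le, ENNReal.mul_rpow_of_nonneg (_ : ℝ≥0∞) (_ ^ q) hrq.le,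
    ENNReal.mul_rpow_of_nonneg (_ : ℝ≥0∞) (intTo _ f ^ q) hrq.le, eq1 (Vop k f _), eq1 (intTo _ f), ← mul_assoc]
  rfl

theorem tonelli_E {u h : ℝ → ℝ≥0∞} (hh : Measurable h)
    (hU : ∀ t : ℝ, 0 < t → intFrom t u ≠ 0 ∧ intFrom t u ≠ ∞) :
    ∫⁻ x, (intFrom x u)⁻¹ * intIoo (ztInv2 u x) x h ∂(nuM u) ≤
      4 * ∫⁻ z in Ioi (0:ℝ), h z := by
  have hcm := (ztInv2_mono u hU).measurable
  set S : Set (ℝ × ℝ) := {a | ztInv2 u a.1 < a.2 ∧ a.2 < a.1} with hS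
  have hSm : MeasurableSet S :=
    (measurableSet_lt (hcm.comp measurable_fst) measurable_snd).inter
      (measurableSet_lt measurable_snd measurable_fst)
  set K : ℝ × ℝ → ℝ≥0∞ := S.indicator fun a => (intFrom a.1 u)⁻¹ * h a.2 with hK
  have hKm : Measurable K :=
    ((((measurable_intFrom u).comp measurable_fst).inv).mul (hh.comp measurable_snd)).indicator hSm
  have e : ∀ x, (intFrom x u)⁻¹ * intIoo (ztInv2 u x) x h = ∫⁻ z, K (x, z) := by
    intro x
    unfold intIoo
    rw [← lintegral_const_mul _ hh, ← lintegral_indicator measurableSet_Ioo]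
    rfl
  simp_rw [e]
  rw [lintegral_lintegral_swap (f := fun x z => K (x, z)) hKm.aemeasurable, ← lintegral_const_mul _ hh,
    ← lintegral_indicator measurableSet_Ioi]
  refine lintegral_mono fun z => ?_
  by_cases hz : 0 < z
  · rw [indicator_of_mem (by exact hz)]
    calc ∫⁻ x, K (x, z) ∂(nuM u)
        ≤ ∫⁻ x, (Ioi z).indicator (fun _ => 4 * (intFrom z u)⁻¹ * h z) x ∂(nuM u) := by
          refine lintegral_mono fun x => ?_
          by_cases hx : (x, z) ∈ S
          · simp only [hK]
            rw [indicator_of_mem hx, indicator_of_mem (by exact hx.2)]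
            refine mul_le_mul' ?_ le_rfl
            have h4 := intFrom_ztInv2 u hU hx.1
            have h0 := (hU z hz).1
            have ht := (hU z hz).2
            rw [← div_eq_mul_inv, ENNReal.le_div_iff_mul_le (Or.inl h0) (Or.inl ht), mul_comm,
              ← div_eq_mul_inv]
            exact ENNReal.div_le_of_le_mul h4
          · simp only [hK]
            rw [indicator_of_notMem hx]; exact bot_le
      _ = 4 * (intFrom z u)⁻¹ * h z * nuM u (Ioi z) := lintegral_indicator_const measurableSet_Ioi _
      _ ≤ 4 * (intFrom z u)⁻¹ * h z * intFrom z u := by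
          refine mul_le_mul' le_rfl ?_
          rw [intFrom_eq]
          exact Measure.restrict_le_self _
      _ = 4 * h z * ((intFrom z u)⁻¹ * intFrom z u) := by ring
      _ = 4 * h z := by rw [ENNReal.inv_mul_cancel (hU z hz).1 (hU z hz).2, mul_one]
  · have : ∀ x, K (x, z) = 0 := by
      intro x
      simp only [hK]
      rw [indicator_of_notMem]
      intro hx
      exact hz ((ztInv2_nonneg u x).trans_lt hx.1)
    simp [this]

/-- local estimate through the norm of the localized operator. -/
theorem Gloc_le {p q : ℝ} (hp : 0 < p) (hq : 0 < q) {u v w f : ℝ → ℝ≥0∞} {k : ℝ → ℝ → ℝ≥0∞}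
    (hU : ∀ t : ℝ, 0 < t → intFrom t u ≠ 0 ∧ intFrom t u ≠ ∞)
    (hf : Measurable f)
    (hfin : ∫⁻ z in Ioi (0:ℝ), f z ^ p * v z ≠ ∞) {x : ℝ} (hx : 0 < x)
    (hN : leastC (fun f => lpN q w (calHscd u k (ztInv u x) (zt u x) f)) (lpN p v) ≠ ∞) :
    Gloc q u w k f x ^ (1/q) ≤
      leastC (fun f => lpN q w (calHscd u k (ztInv u x) (zt u x) f)) (lpN p v) *
        intIoo (ztInv2 u x) x (fun z => f z ^ p * v z) ^ (1/p) := by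
  set c := ztInv2 u x with hc
  set f1 : ℝ → ℝ≥0∞ := (Ioo c x).indicator f with hf1
  have hsub : Ioo c x ⊆ Ioi 0 := fun z hz => (ztInv2_nonneg u x).trans_lt hz.1
  have e1 : lpN p v f1 = intIoo c x (fun z => f z ^ p * v z) ^ (1/p) := by
    unfold lpN intIoo
    congr 1
    rw [← lintegral_indicator measurableSet_Ioi, ← lintegral_indicator measurableSet_Ioo]
    congr 1; ext z
    by_cases hz : z ∈ Ioo c x
    · rw [indicator_of_mem hz, indicator_of_mem (hsub hz)]
      simp only [hf1]
      rw [indicator_of_mem hz]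
    · rw [indicator_of_notMem hz]
      have : f1 z = 0 := indicator_of_notMem hz _
      by_cases hz0 : z ∈ Ioi (0:ℝ)
      · rw [indicator_of_mem hz0, this]; simp [hp]
      · rw [indicator_of_notMem hz0]
  have ht : lpN p v f1 ≠ ∞ := by
    rw [e1]
    refine ENNReal.rpow_ne_top_of_nonneg (by positivity) (ne_top_of_le_ne_top hfin ?_)
    exact lintegral_mono_set hsub
  have h1 := le_leastC' (Φ := fun f => lpN q w (calHscd u k (ztInv u x) (zt u x) f)) hN
    (hf.indicator measurableSet_Ioo : Measurable f1) ht
  rw [e1] at h1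
  refine le_trans ?_ h1
  unfold Gloc lpN
  refine ENNReal.rpow_le_rpow ?_ (by positivity)
  refine le_trans ?_ (lintegral_mono_set (s := Ioo (ztInv u x) x)
    (fun z hz => (ztInv_nonneg u x).trans_lt hz.1))
  refine setLIntegral_mono' measurableSet_Ioo ?_
  intro y hy
  rw [mul_comm]
  refine mul_le_mul' (ENNReal.rpow_le_rpow ?_ hq.le) le_rfl
  unfold calHscd
  rw [if_pos ⟨hy.1, hy.2.le.trans (le_zt u hU hx)⟩]
  refine setLIntegral_mono' measurableSet_Ioo ?_
  intro z hz
  have hmem : z ∈ Ioo c x := ⟨hz.1, hz.2.trans hy.2⟩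
  rw [indicator_of_mem hmem]


theorem IG_case1 {p q r : ℝ} (hp : 0 < p) (hq : 0 < q) (hr : 0 < r) (hpr : p ≤ r)
    {u v w : ℝ → ℝ≥0∞} {k : ℝ → ℝ → ℝ≥0∞} (hv : Measurable v)
    (hU : ∀ t : ℝ, 0 < t → intFrom t u ≠ 0 ∧ intFrom t u ≠ ∞)
    {f : ℝ → ℝ≥0∞} (hf : Measurable f)
    (hP : ∫⁻ z in Ioi (0:ℝ), f z ^ p * v z ≠ ∞) (hA : bfA2 p r q u v w k ≠ ∞) :
    ∫⁻ x, Gloc q u w k f x ^ (r/q) ∂(nuM u) ≤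
      8 * (bfA2 p r q u v w k ^ r * (∫⁻ z in Ioi (0:ℝ), f z ^ p * v z) ^ (r/p)) := by
  set A := bfA2 p r q u v w k with hAdef
  set P := ∫⁻ z in Ioi (0:ℝ), f z ^ p * v z with hPdef
  set h : ℝ → ℝ≥0∞ := fun z => f z ^ p * v z with hh
  have hhm : Measurable h := (hf.pow_const p).mul hv
  have hE : ∀ x, intIoo (ztInv2 u x) x h ≤ P := fun x =>
    lintegral_mono_set fun z hz => (ztInv2_nonneg u x).trans_lt hz.1
  have key : ∀ x, 0 < x → Gloc q u w k f x ^ (r/q) ≤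
      2 * A ^ r * P ^ (r/p - 1) * ((intFrom x u)⁻¹ * intIoo (ztInv2 u x) x h) := by
    intro x hx
    have hxz := le_zt u hU hx
    have hz0 : 0 < zt u x := hx.trans_le hxz
    set N := leastC (fun f => lpN q w (calHscd u k (ztInv u x) (zt u x) f)) (lpN p v) with hN
    have hN1 : (intFrom (zt u x) u) ^ (1/r) * N ≤ A := by
      refine (mul_le_mul' le_rfl (Hscd_le_Hsd hq (ztInv_nonneg u x) le_rfl)).trans ?_
      rw [hAdef]; unfold bfA2; rw [if_pos hpr]
      exact le_iSup₂ (f := fun (t : ℝ) (_ : 0 < t) => (intFrom t u) ^ (1/r) *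
        leastC (fun f => lpN q w (calHsd k t f)) (lpN p v)) (zt u x) hz0
    have hNt : N ≠ ∞ := by
      intro hcon
      rw [hcon, ENNReal.mul_top] at hN1
      · exact hA (top_le_iff.mp hN1)
      · have := (hU _ hz0).1
        simp [ENNReal.rpow_eq_zero_iff, this, hr, hr.le]
    have hhalf : intFrom x u / 2 ≤ intFrom (zt u x) u := le_intFrom_Zt u hU hz0
    have hN2 : intFrom x u * N ^ r ≤ 2 * A ^ r := by
      have h1 := ENNReal.rpow_le_rpow hN1 hr.le
      rw [ENNReal.mul_rpow_of_nonneg _ _ hr.le, ← ENNReal.rpow_mul, one_div,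
        inv_mul_cancel₀ hr.ne', ENNReal.rpow_one] at h1
      calc intFrom x u * N ^ r ≤ (2 * intFrom (zt u x) u) * N ^ r := by
            refine mul_le_mul' ?_ le_rfl
            rw [mul_comm]
            exact (ENNReal.div_le_iff_le_mul (by simp) (by simp)).mp hhalf
        _ = 2 * (intFrom (zt u x) u * N ^ r) := by ring
        _ ≤ _ := by gcongr
    have hN3 : N ^ r ≤ 2 * A ^ r * (intFrom x u)⁻¹ := by
      rw [← div_eq_mul_inv, ENNReal.le_div_iff_mul_le (Or.inl (hU x hx).1) (Or.inl (hU x hx).2),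
        mul_comm]
      exact hN2
    have hG := Gloc_le (k := k) (w := w) hp hq hU hf hP hx hNt
    have hG2 := ENNReal.rpow_le_rpow hG hr.le
    rw [← ENNReal.rpow_mul, ENNReal.mul_rpow_of_nonneg _ _ hr.le, ← ENNReal.rpow_mul,
      show 1 / q * r = r / q by ring, show 1 / p * r = r / p by ring] at hG2
    have hEE : intIoo (ztInv2 u x) x h ^ (r/p) ≤ intIoo (ztInv2 u x) x h * P ^ (r/p - 1) := by
      have : r / p = 1 + (r/p - 1) := by ring
      have h0 : 0 ≤ r/p - 1 := by
        rw [sub_nonneg, le_div_iff₀ hp]; linarith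
      rw [this, ENNReal.rpow_add_of_nonneg _ _ zero_le_one h0, ENNReal.rpow_one, ← this]
      exact mul_le_mul' le_rfl (ENNReal.rpow_le_rpow (hE x) h0)
    calc _ ≤ N ^ r * intIoo (ztInv2 u x) x h ^ (r/p) := hG2
      _ ≤ (2 * A ^ r * (intFrom x u)⁻¹) * (intIoo (ztInv2 u x) x h * P ^ (r/p - 1)) :=
          mul_le_mul' hN3 hEE
      _ = _ := by ring
  have h0 : 0 ≤ r/p - 1 := by
    rw [sub_nonneg, le_div_iff₀ hp]; linarith
  have hKt : 2 * A ^ r * P ^ (r/p - 1) ≠ ∞ := ENNReal.mul_ne_top (ENNReal.mul_ne_top (by simp)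
    (ENNReal.rpow_ne_top_of_nonneg hr.le hA)) (ENNReal.rpow_ne_top_of_nonneg h0 hP)
  calc ∫⁻ x, Gloc q u w k f x ^ (r/q) ∂(nuM u)
      ≤ ∫⁻ x, 2 * A ^ r * P ^ (r/p - 1) * ((intFrom x u)⁻¹ * intIoo (ztInv2 u x) x h) ∂(nuM u) := by
        refine lintegral_mono_ae ?_
        filter_upwards [ae_pos_nuM u] with x hx using key x hx
    _ = 2 * A ^ r * P ^ (r/p - 1) * ∫⁻ x, (intFrom x u)⁻¹ * intIoo (ztInv2 u x) x h ∂(nuM u) :=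
        lintegral_const_mul' _ _ hKt
    _ ≤ 2 * A ^ r * P ^ (r/p - 1) * (4 * P) := mul_le_mul' le_rfl (tonelli_E hhm hU)
    _ = 8 * (A ^ r * (P ^ (1:ℝ) * P ^ (r/p - 1))) := by rw [ENNReal.rpow_one]; ring
    _ = _ := by
        rw [← ENNReal.rpow_add_of_nonneg _ _ zero_le_one h0]
        congr 3; ring

theorem IG_case2 {p q r s : ℝ} (hp : 0 < p) (hq : 0 < q) (hr : 0 < r) (hs : 0 < s)
    (hrs : r / s + r / p = 1)
    {u v w : ℝ → ℝ≥0∞} {k : ℝ → ℝ → ℝ≥0∞} (hu : Measurable u) (hv : Measurable v)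
    (hw : Measurable w) (hk : Measurable (Function.uncurry k))
    (hU : ∀ t : ℝ, 0 < t → intFrom t u ≠ 0 ∧ intFrom t u ≠ ∞)
    {f : ℝ → ℝ≥0∞} (hf : Measurable f)
    (hP : ∫⁻ z in Ioi (0:ℝ), f z ^ p * v z ≠ ∞) {B : ℝ≥0∞} (hB : B ≠ ∞)
    (hA : ∫⁻ x in Ioi (0:ℝ), u x * (intFrom x u) ^ (s / p) *
        leastC (fun f => lpN q w (calHscd u k (ztInv u x) (zt u x) f)) (lpN p v) ^ s ≤ B) :
    ∫⁻ x, Gloc q u w k f x ^ (r/q) ∂(nuM u) ≤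
      4 ^ (r/p) * (B ^ (r/s) * (∫⁻ z in Ioi (0:ℝ), f z ^ p * v z) ^ (r/p)) := by
  set P := ∫⁻ z in Ioi (0:ℝ), f z ^ p * v z with hPdef
  set h : ℝ → ℝ≥0∞ := fun z => f z ^ p * v z with hh
  have hhm : Measurable h := (hf.pow_const p).mul hv
  set E : ℝ → ℝ≥0∞ := fun x => intIoo (ztInv2 u x) x h with hEdef
  have hE : ∀ x, E x ≤ P := fun x =>
    lintegral_mono_set fun z hz => (ztInv2_nonneg u x).trans_lt hz.1
  have hEm : Measurable E := measurable_var_intIoo (h := fun _ => h)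
    (ztInv2_mono u hU).measurable measurable_id (hhm.comp measurable_snd)
  have hGm : Measurable (Gloc q u w k f) := measurable_Gloc hU hw hk hf
  set g : ℝ → ℝ≥0∞ := fun x => Gloc q u w k f x ^ (1/q) / E x ^ (1/p) with hg
  have hgm : Measurable g := (hGm.pow_const _).div (hEm.pow_const _)
  have hUm := measurable_intFrom u
  have hgN : ∀ x, 0 < x → g x ≤
      leastC (fun f => lpN q w (calHscd u k (ztInv u x) (zt u x) f)) (lpN p v) := by
    intro x hx
    by_cases hN : leastC (fun f => lpN q w (calHscd u k (ztInv u x) (zt u x) f)) (lpN p v) = ∞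
    · rw [hN]; exact le_top
    · exact ENNReal.div_le_of_le_mul (Gloc_le hp hq hU hf hP hx hN)
  have hFm : Measurable fun x => intFrom x u ^ (s/p) * g x ^ s :=
    (hUm.pow_const _).mul (hgm.pow_const _)
  have hBd : ∫⁻ x, intFrom x u ^ (s/p) * g x ^ s ∂(nuM u) ≤ B := by
    refine le_trans ?_ hA
    rw [lintegral_nuM hu hFm]
    refine setLIntegral_mono' measurableSet_Ioi ?_
    intro x hx
    rw [← mul_assoc]
    exact mul_le_mul' le_rfl (ENNReal.rpow_le_rpow (hgN x hx) hs.le)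
  have hae := ae_lt_top hFm (ne_top_of_le_ne_top hB hBd)
  have hpt : ∀ᵐ x ∂(nuM u), Gloc q u w k f x ^ (r/q) ≤
      (intFrom x u ^ (r/p) * g x ^ r) * ((intFrom x u)⁻¹ ^ (r/p) * E x ^ (r/p)) := by
    filter_upwards [ae_pos_nuM u, hae] with x hx hlt
    have hU0 := (hU x hx).1
    have hUt := (hU x hx).2
    have hgt : g x ≠ ∞ := by
      intro hcon
      rw [hcon, ENNReal.top_rpow_of_pos hs, ENNReal.mul_top] at hlt
      · exact lt_irrefl _ hlt
      · exact (ENNReal.rpow_pos (pos_iff_ne_zero.mpr hU0) hUt).ne'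
    have h1 : Gloc q u w k f x ^ (1/q) ≤ g x * E x ^ (1/p) := by
      have hEt : E x ^ (1/p) ≠ ∞ := ENNReal.rpow_ne_top_of_nonneg (by positivity)
        (ne_top_of_le_ne_top hP (hE x))
      by_cases hE0 : E x ^ (1/p) = 0
      · by_cases hG0 : Gloc q u w k f x ^ (1/q) = 0
        · rw [hG0]; exact bot_le
        · exfalso; apply hgt
          simp only [hg]
          rw [hE0, ENNReal.div_zero hG0]
      · rw [hg]; exact (ENNReal.div_mul_cancel hE0 hEt).ge
    have h2 := ENNReal.rpow_le_rpow h1 hr.le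
    rw [← ENNReal.rpow_mul, ENNReal.mul_rpow_of_nonneg _ _ hr.le, ← ENNReal.rpow_mul,
      show 1 / q * r = r / q by ring, show 1 / p * r = r / p by ring] at h2
    refine h2.trans (le_of_eq ?_)
    have h3 : intFrom x u ^ (r/p) * (intFrom x u)⁻¹ ^ (r/p) = 1 := by
      rw [← ENNReal.mul_rpow_of_nonneg _ _ (by positivity), ENNReal.mul_inv_cancel hU0 hUt,
        ENNReal.one_rpow]
    calc g x ^ r * E x ^ (r/p)
        = (intFrom x u ^ (r/p) * (intFrom x u)⁻¹ ^ (r/p)) * (g x ^ r * E x ^ (r/p)) := by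
          rw [h3, one_mul]
      _ = _ := by ring
  have hconj : (s/r).HolderConjugate (p/r) := by
    rw [Real.holderConjugate_iff]
    have hlt : r / s < 1 := by
      have : 0 < r / p := by positivity
      linarith
    refine ⟨?_, ?_⟩
    · rw [lt_div_iff₀ hr]; rw [div_lt_one hs] at hlt; linarith
    · rw [inv_div, inv_div]; exact hrs
  have hm1 : Measurable fun x => intFrom x u ^ (r/p) * g x ^ r :=
    (hUm.pow_const _).mul (hgm.pow_const _)
  have hm2 : Measurable fun x => (intFrom x u)⁻¹ ^ (r/p) * E x ^ (r/p) :=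
    (hUm.inv.pow_const _).mul (hEm.pow_const _)
  have hH := ENNReal.lintegral_mul_le_Lp_mul_Lq (nuM u) hconj hm1.aemeasurable hm2.aemeasurable
  have e1 : ∀ x, (intFrom x u ^ (r/p) * g x ^ r) ^ (s/r) = intFrom x u ^ (s/p) * g x ^ s := by
    intro x
    rw [ENNReal.mul_rpow_of_nonneg _ _ (by positivity), ← ENNReal.rpow_mul, ← ENNReal.rpow_mul]
    congr 2 <;> field_simp
  have e2 : ∀ x, ((intFrom x u)⁻¹ ^ (r/p) * E x ^ (r/p)) ^ (p/r) = (intFrom x u)⁻¹ * E x := by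
    intro x
    rw [ENNReal.mul_rpow_of_nonneg _ _ (by positivity), ← ENNReal.rpow_mul, ← ENNReal.rpow_mul,
      show r / p * (p / r) = 1 by field_simp, ENNReal.rpow_one, ENNReal.rpow_one]
  simp only [e1, e2, one_div_div] at hH
  calc _ ≤ _ := lintegral_mono_ae hpt
    _ ≤ _ := hH
    _ ≤ B ^ (r/s) * (4 * P) ^ (r/p) :=
        mul_le_mul' (ENNReal.rpow_le_rpow hBd (by positivity))
          (ENNReal.rpow_le_rpow (tonelli_E hhm hU) (by positivity))
    _ = _ := by
        rw [ENNReal.mul_rpow_of_nonneg _ _ (by positivity)]; ring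

theorem IG_all {p q r : ℝ} (hp : 0 < p) (hq : 0 < q) (hr : 0 < r)
    {u v w : ℝ → ℝ≥0∞} {k : ℝ → ℝ → ℝ≥0∞} (hu : Measurable u) (hv : Measurable v)
    (hw : Measurable w) (hk : Measurable (Function.uncurry k))
    (hU : ∀ t : ℝ, 0 < t → intFrom t u ≠ 0 ∧ intFrom t u ≠ ∞)
    {f : ℝ → ℝ≥0∞} (hf : Measurable f)
    (hP : ∫⁻ z in Ioi (0:ℝ), f z ^ p * v z ≠ ∞) (hA : bfA2 p r q u v w k ≠ ∞) :
    ∫⁻ x, Gloc q u w k f x ^ (r/q) ∂(nuM u) ≤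
      (8 + 4 ^ (r/p)) * (bfA2 p r q u v w k * lpN p v f) ^ r := by
  have e : (bfA2 p r q u v w k * lpN p v f) ^ r =
      bfA2 p r q u v w k ^ r * (∫⁻ z in Ioi (0:ℝ), f z ^ p * v z) ^ (r/p) := by
    rw [ENNReal.mul_rpow_of_nonneg _ _ hr.le]
    unfold lpN
    rw [← ENNReal.rpow_mul, show 1 / p * r = r / p by ring]
  rw [e]
  by_cases hpr : p ≤ r
  · exact (IG_case1 hp hq hr hpr hv hU hf hP hA).trans (mul_le_mul' le_self_add le_rfl)
  · have hrp : r < p := not_le.mp hpr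
    have hd : 0 < 1/r - 1/p := by
      have := one_div_lt_one_div_of_lt hr hrp
      linarith
    have hs : 0 < (1/r - 1/p)⁻¹ := inv_pos.mpr hd
    have hrs : r / (1/r - 1/p)⁻¹ + r / p = 1 := by field_simp; ring
    have hA' := hA
    unfold bfA2 at hA'
    rw [if_neg hpr] at hA'
    have hB : (∫⁻ x in Ioi (0:ℝ), u x * (intFrom x u) ^ ((1/r - 1/p)⁻¹ / p) *
        leastC (fun f => lpN q w (calHscd u k (ztInv u x) (zt u x) f)) (lpN p v)
          ^ (1/r - 1/p)⁻¹) ≠ ∞ := by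
      intro hcon
      rw [hcon, ENNReal.top_rpow_of_pos hd] at hA'
      exact hA' rfl
    have h1 := IG_case2 hp hq hr hs hrs hu hv hw hk hU hf hP hB le_rfl
    have e2 : bfA2 p r q u v w k ^ r = (∫⁻ x in Ioi (0:ℝ), u x *
        (intFrom x u) ^ ((1/r - 1/p)⁻¹ / p) *
        leastC (fun f => lpN q w (calHscd u k (ztInv u x) (zt u x) f)) (lpN p v)
          ^ (1/r - 1/p)⁻¹) ^ (r / (1/r - 1/p)⁻¹) := by
      unfold bfA2
      rw [if_neg hpr, ← ENNReal.rpow_mul]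
      congr 1
      rw [div_inv_eq_mul, mul_comm]
    rw [e2]
    exact h1.trans (mul_le_mul' le_add_self le_rfl)

theorem upper_all {p q r : ℝ} (hp : 0 < p) (hq : 0 < q) (hr : 0 < r) {D : ℝ≥0∞}
    (hD1 : 1 ≤ D) (hD : D ≠ ∞) {Cb : ℝ≥0∞}
    {u v w : ℝ → ℝ≥0∞} {k : ℝ → ℝ → ℝ≥0∞} (hu : Measurable u) (hv : Measurable v)
    (hw : Measurable w) (hk : Measurable (Function.uncurry k))
    (hU : ∀ t : ℝ, 0 < t → intFrom t u ≠ 0 ∧ intFrom t u ≠ ∞) (hO : Oinarov k D)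
    (hCb : ∀ g : ℝ → ℝ≥0∞, Measurable g → ∫⁻ x, (intTo x g) ^ (r/q) ∂(nuM u) ≤
      Cb * ∫⁻ x, (intIoo (ztInv u x) x g) ^ (r/q) ∂(nuM u))
    (hfin : bfA0 p r q u v w k + bfA1 p r q u v w k + bfA2 p r q u v w k ≠ ∞) :
    CSc p r q u v w k ≤ (Cb * ((D ^ q * 3 ^ q) ^ (r/q) * 3 ^ (r/q)) *
      (1 + 1 + (8 + 4 ^ (r/p)))) ^ (1/r) *
      (bfA0 p r q u v w k + bfA1 p r q u v w k + bfA2 p r q u v w k) := by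
  set S := bfA0 p r q u v w k + bfA1 p r q u v w k + bfA2 p r q u v w k with hS
  have h0S : bfA0 p r q u v w k ≤ S := le_self_add.trans le_self_add
  have h1S : bfA1 p r q u v w k ≤ S := le_add_self.trans le_self_add
  have h2S : bfA2 p r q u v w k ≤ S := le_add_self
  refine leastC_le' ?_
  intro f hf hft
  have hP : ∫⁻ z in Ioi (0:ℝ), f z ^ p * v z ≠ ∞ := by
    intro hcon
    apply hft
    unfold lpN
    rw [hcon, ENNReal.top_rpow_of_pos (by positivity)]
  have root : ∀ I X : ℝ≥0∞, I ^ (1/r) ≤ X → I ≤ X ^ r := by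
    intro I X h
    have := ENNReal.rpow_le_rpow h hr.le
    rwa [← ENNReal.rpow_mul, one_div, inv_mul_cancel₀ hr.ne', ENNReal.rpow_one] at this
  have b0 := root _ _ ((le_leastC' (ne_top_of_le_ne_top hfin h0S) hf hft).trans
    (mul_le_mul' h0S le_rfl))
  have b1 := root _ _ ((le_leastC' (ne_top_of_le_ne_top hfin h1S) hf hft).trans
    (mul_le_mul' h1S le_rfl))
  have b2 := (IG_all hp hq hr hu hv hw hk hU hf hP (ne_top_of_le_ne_top hfin h2S)).trans
    (mul_le_mul' le_rfl (ENNReal.rpow_le_rpow (mul_le_mul' h2S le_rfl) hr.le))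
  have hsp := upper_split hq hr hD1 hD hu hw hU hk hO hf
  have hbl := hCb (fun y => w y * Vop k f y ^ q) (hw.mul ((measurable_Vop hk hf).pow_const q))
  have htot : ∫⁻ x, (intTo x (fun y => w y * Vop k f y ^ q)) ^ (r/q) ∂(nuM u) ≤
      (Cb * ((D ^ q * 3 ^ q) ^ (r/q) * 3 ^ (r/q)) * (1 + 1 + (8 + 4 ^ (r/p)))) *
        (S * lpN p v f) ^ r := by
    refine (hbl.trans (mul_le_mul' le_rfl (hsp.trans (mul_le_mul' le_rfl
      (add_le_add (add_le_add b0 b1) b2))))).trans (le_of_eq ?_)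
    ring
  rw [lpN_opSc hq hu]
  refine (ENNReal.rpow_le_rpow htot (by positivity)).trans (le_of_eq ?_)
  rw [ENNReal.mul_rpow_of_nonneg _ _ (by positivity), ← ENNReal.rpow_mul,
    mul_one_div_cancel hr.ne', ENNReal.rpow_one]
  exact (mul_assoc _ _ _).symm


theorem statement4 (p r q : ℝ) (D : ℝ≥0∞)
    (hp : 1 ≤ p) (hr : 0 < r) (hq : 0 < q) (hD1 : 1 ≤ D) (hD : D ≠ ∞) :
    ∃ c₁ c₂ : ℝ≥0∞, 0 < c₁ ∧ c₁ ≠ ∞ ∧ 0 < c₂ ∧ c₂ ≠ ∞ ∧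
      ∀ (u v w : ℝ → ℝ≥0∞) (k : ℝ → ℝ → ℝ≥0∞),
        Measurable u → Measurable v → Measurable w →
        Measurable (Function.uncurry k) →
        (∀ t : ℝ, 0 < t → intFrom t u ≠ 0 ∧ intFrom t u ≠ ∞) →
        Oinarov k D →
        (CSc p r q u v w k < ∞ ↔
            bfA0 p r q u v w k + bfA1 p r q u v w k + bfA2 p r q u v w k < ∞) ∧
        CSc p r q u v w k ≤
            c₁ * (bfA0 p r q u v w k + bfA1 p r q u v w k + bfA2 p r q u v w k) ∧
        bfA0 p r q u v w k + bfA1 p r q u v w k + bfA2 p r q u v w k ≤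
            c₂ * CSc p r q u v w k := by
  obtain ⟨Cb, hCbt, hCb⟩ := block_lemma (a := r/q) (by positivity)
  have hp0 : 0 < p := lt_of_lt_of_le one_pos hp
  have hD0 : D ≠ 0 := (lt_of_lt_of_le one_pos hD1).ne'
  have hrq : 0 ≤ r/q := by positivity
  set K : ℝ≥0∞ := (Cb * ((D ^ q * 3 ^ q) ^ (r/q) * 3 ^ (r/q)) *
      (1 + 1 + (8 + 4 ^ (r/p)))) ^ (1/r) with hK
  set K2 : ℝ≥0∞ := D + D + (1 + (4 * (2 * 2 ^ r)) ^ (1/r)) with hK2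
  have hKt : K ≠ ∞ := by
    refine ENNReal.rpow_ne_top_of_nonneg (by positivity) (ENNReal.mul_ne_top (ENNReal.mul_ne_top
      hCbt (ENNReal.mul_ne_top (ENNReal.rpow_ne_top_of_nonneg hrq (ENNReal.mul_ne_top
      (ENNReal.rpow_ne_top_of_nonneg hq.le hD) (ENNReal.rpow_ne_top_of_nonneg hq.le (by simp))))
      (ENNReal.rpow_ne_top_of_nonneg hrq (by simp)))) ?_)
    have : (4:ℝ≥0∞) ^ (r/p) ≠ ∞ := ENNReal.rpow_ne_top_of_nonneg (by positivity) (by simp)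
    simp [this]
  have hK2t : K2 ≠ ∞ := by
    have : ((4:ℝ≥0∞) * (2 * 2 ^ r)) ^ (1/r) ≠ ∞ :=
      ENNReal.rpow_ne_top_of_nonneg (by positivity) (ENNReal.mul_ne_top (by simp)
        (ENNReal.mul_ne_top (by simp) (ENNReal.rpow_ne_top_of_nonneg hr.le (by simp))))
    exact ENNReal.add_ne_top.mpr ⟨ENNReal.add_ne_top.mpr ⟨hD, hD⟩,
      ENNReal.add_ne_top.mpr ⟨by simp, this⟩⟩
  have hK1t : K + 1 ≠ ∞ := ENNReal.add_ne_top.mpr ⟨hKt, by simp⟩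
  refine ⟨K + 1, K2, lt_of_lt_of_le one_pos le_add_self, hK1t,
    lt_of_lt_of_le one_pos ((hD1.trans le_self_add).trans le_self_add), hK2t, ?_⟩
  intro u v w k hu hv hw hk hU hO
  have up : CSc p r q u v w k ≤
      (K + 1) * (bfA0 p r q u v w k + bfA1 p r q u v w k + bfA2 p r q u v w k) := by
    by_cases hfin : bfA0 p r q u v w k + bfA1 p r q u v w k + bfA2 p r q u v w k = ∞
    · rw [hfin, ENNReal.mul_top (by simp)]; exact le_top
    · exact (upper_all hp0 hq hr hD1 hD hu hv hw hk hU hO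
        (fun g hg => hCb u g hu hg hU) hfin).trans (mul_le_mul' le_self_add le_rfl)
  have low : bfA0 p r q u v w k + bfA1 p r q u v w k + bfA2 p r q u v w k ≤
      K2 * CSc p r q u v w k := by
    rw [hK2, add_mul, add_mul]
    exact add_le_add (add_le_add (lower_A0 hq hr hD0 hD hw hO) (lower_A1 hq hr hD0 hD hw hk hO))
      (lower_A2 hp0 hq hr hu hv hU)
  exact ⟨⟨fun h => low.trans_lt (ENNReal.mul_lt_top hK2t.lt_top h),
    fun h => up.trans_lt (ENNReal.mul_lt_top hK1t.lt_top h)⟩, up, low⟩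

end
end

section
/- Let 1 ≤ p < ∞, r = ∞, 0 < q ≤ ∞, let u, v, w ∈ 𝔐⁺ be weights and let k(x,y) ≥ 0 be a Borel kernel on [0,∞)² with k(x,y) = 0 for x < y. Define (Tf)(x) := (∫ₓ^∞ w(y)(∫₀ʸ k(y,z)f(z)dz)^q dy)^{1/q} (essential supremum over y ≥ x of w(y)∫₀ʸ k(y,z)f(z)dz when q = ∞), set U(t) := ess sup_{0≤x≤t} u(x), and (H_t f)(x) := χ_{[t,∞)}(x)∫₀ˣ k(x,z)f(z)dz. Then the least constant C_T such that ‖Tf‖_{L^∞_u} ≤ C_T‖f‖_{L^p_v} for all f ∈ 𝔐⁺ equals sup_{t≥0} U(t)‖H_t‖_{L^p_v→L^q_w}. -/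
open MeasureTheory Set ENNReal

noncomputable section

/-- The operator `T` with exponent `q ∈ (0,∞]`. -/
def opTg (q : ℝ≥0∞) (w : ℝ → ℝ≥0∞) (k : ℝ → ℝ → ℝ≥0∞) (f : ℝ → ℝ≥0∞) (x : ℝ) : ℝ≥0∞ :=
  if q = ∞ then
    essSup (fun y => w y * intTo y (fun z => k y z * f z)) (volume.restrict (Ici x))
  else
    (∫⁻ y in Ioi x, w y * (intTo y (fun z => k y z * f z)) ^ q.toReal) ^ (1/q.toReal)

/-- `(H_t f)(x) = χ_{[t,∞)}(x) ∫₀ˣ k(x,z) f(z) dz`. -/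
def Ht (k : ℝ → ℝ → ℝ≥0∞) (t : ℝ) (f : ℝ → ℝ≥0∞) (x : ℝ) : ℝ≥0∞ :=
  if t ≤ x then intTo x (fun z => k x z * f z) else 0

/-- `U(t) = ess sup_{0 ≤ x ≤ t} u(x)`. -/
def Ubar (u : ℝ → ℝ≥0∞) (t : ℝ) : ℝ≥0∞ :=
  essSup u (volume.restrict (Icc (0:ℝ) t))

theorem ae_le_Ubar (u : ℝ → ℝ≥0∞) :
    ∀ᵐ x ∂(volume.restrict (Ioi (0:ℝ))), u x ≤ Ubar u x := by
  rw [ae_restrict_iff' measurableSet_Ioi]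
  have key : ∀ c : ℝ≥0∞, volume {x : ℝ | 0 < x ∧ Ubar u x ≤ c ∧ c < u x} = 0 := by
    intro c
    have h1 : ∀ y ∈ {x : ℝ | 0 < x ∧ Ubar u x ≤ c ∧ c < u x},
        volume ({x : ℝ | 0 < x ∧ Ubar u x ≤ c ∧ c < u x} ∩ Iic y) = 0 := by
      rintro y ⟨hy0, hyc, -⟩
      have h2 : ∀ᵐ x ∂(volume.restrict (Icc (0:ℝ) y)), u x ≤ Ubar u y := ae_le_essSup u
      rw [ae_restrict_iff' measurableSet_Icc] at h2
      refine measure_mono_null ?_ (ae_iff.1 h2)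
      rintro x ⟨⟨hx0, -, hx⟩, hxy⟩
      simp only [mem_ofPred_eq]
      intro h
      exact absurd (h ⟨hx0.le, hxy⟩) (not_le.2 (hyc.trans_lt hx))
    apply measure_null_of_locally_null
    intro x hx
    by_cases h : ∃ y ∈ {x : ℝ | 0 < x ∧ Ubar u x ≤ c ∧ c < u x}, x < y
    · obtain ⟨y, hy, hxy⟩ := h
      exact ⟨_, Filter.inter_mem self_mem_nhdsWithin
        (mem_nhdsWithin_of_mem_nhds (Iic_mem_nhds hxy)), h1 y hy⟩
    · push Not at h
      refine ⟨_, self_mem_nhdsWithin, measure_mono_null ?_ (h1 x hx)⟩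
      intro z hz
      exact ⟨hz, h z hz⟩
  have h3 : volume (⋃ r : ℚ, {x : ℝ | 0 < x ∧ Ubar u x ≤ (Real.toNNReal r : ℝ≥0∞) ∧
      (Real.toNNReal r : ℝ≥0∞) < u x}) = 0 := measure_iUnion_null fun r => key _
  refine ae_iff.2 (measure_mono_null ?_ h3)
  intro x hx
  simp only [mem_ofPred_eq, Classical.not_imp, not_le] at hx
  obtain ⟨r, -, hr1, hr2⟩ := ENNReal.lt_iff_exists_rat_btwn.1 hx.2
  exact mem_iUnion.2 ⟨r, hx.1, hr1.le, hr2⟩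

theorem opTg_anti (q : ℝ≥0∞) (w : ℝ → ℝ≥0∞) (k : ℝ → ℝ → ℝ≥0∞) (f : ℝ → ℝ≥0∞) {x y : ℝ}
    (h : x ≤ y) : opTg q w k f y ≤ opTg q w k f x := by
  unfold opTg
  split_ifs with hq
  · exact essSup_mono_measure' (Measure.restrict_mono (Ici_subset_Ici.2 h) le_rfl)
  · exact ENNReal.rpow_le_rpow (lintegral_mono_set (Ioi_subset_Ioi h)) (by positivity)

theorem opTg_eq (q : ℝ≥0∞) (hq : 0 < q) (w : ℝ → ℝ≥0∞) (k : ℝ → ℝ → ℝ≥0∞)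
    (f : ℝ → ℝ≥0∞) {t : ℝ} (ht : 0 ≤ t) : opTg q w k f t = lgenN q w (Ht k t f) := by
  have hset : (Ici t ∩ Ioi 0 : Set ℝ) =ᵐ[volume] Ioi t := by
    have : (Ioi t ∩ Ioi 0 : Set ℝ) = Ioi t :=
      inter_eq_left.2 (Ioi_subset_Ioi ht)
    rw [← this]
    exact (Ioi_ae_eq_Ici (a := t)).symm.inter (Filter.EventuallyEq.refl _ _) |>.trans
      (by rw [this]; exact Filter.EventuallyEq.refl _ _)
  unfold opTg lgenN
  split_ifs with h
  · unfold linfN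
    have : (fun x => w x * Ht k t f x)
        = (Ici t).indicator (fun y => w y * intTo y (fun z => k y z * f z)) := by
      ext x
      by_cases hx : t ≤ x <;> simp [Ht, hx, indicator]
    rw [this, ENNReal.essSup_indicator_eq_essSup_restrict measurableSet_Ici,
      Measure.restrict_restrict measurableSet_Ici, Measure.restrict_congr_set hset,
      Measure.restrict_congr_set Ioi_ae_eq_Ici]
  · unfold lpN
    have hq' : 0 < q.toReal := ENNReal.toReal_pos hq.ne' h
    have : (fun x => Ht k t f x ^ q.toReal * w x)
        = (Ici t).indicator (fun y => w y * (intTo y (fun z => k y z * f z)) ^ q.toReal) := by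
      ext x
      by_cases hx : t ≤ x <;> simp [Ht, hx, indicator, hq', mul_comm]
    rw [this, lintegral_indicator measurableSet_Ici,
      Measure.restrict_restrict measurableSet_Ici, Measure.restrict_congr_set hset]

theorem linfN_eq (u G : ℝ → ℝ≥0∞) (hG : Antitone G) :
    linfN u G = ⨆ (t : ℝ) (_ : 0 ≤ t), Ubar u t * G t := by
  apply le_antisymm
  · refine essSup_le_of_ae_le _ ?_ (by isBoundedDefault)
    filter_upwards [ae_le_Ubar u, ae_restrict_mem measurableSet_Ioi] with x hx hx0
    exact (mul_le_mul_left hx _).trans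
      (le_iSup₂ (f := fun (t : ℝ) (_ : 0 ≤ t) => Ubar u t * G t) x (le_of_lt hx0))
  · refine iSup₂_le fun t ht => ?_
    unfold Ubar linfN
    rw [mul_comm, ← ENNReal.essSup_const_mul]
    rw [← Measure.restrict_congr_set (Ioc_ae_eq_Icc (a := (0:ℝ)) (b := t))]
    refine le_trans ?_ (essSup_mono_measure'
      (Measure.restrict_mono (fun x (hx : x ∈ Ioc (0:ℝ) t) => hx.1) le_rfl))
    refine essSup_mono_ae ?_ (by isBoundedDefault) (by isBoundedDefault)
    filter_upwards [ae_restrict_mem measurableSet_Ioc] with x hx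
    rw [mul_comm]
    exact mul_le_mul_right (hG hx.2) _

theorem leastC_eq (U : ℝ → ℝ≥0∞) (G : ℝ → (ℝ → ℝ≥0∞) → ℝ≥0∞) (Φ Ψ : (ℝ → ℝ≥0∞) → ℝ≥0∞)
    (hΦ : ∀ f, Φ f = ⨆ (t : ℝ) (_ : 0 ≤ t), U t * G t f) :
    leastC Φ Ψ = ⨆ (t : ℝ) (_ : 0 ≤ t), U t * leastC (G t) Ψ := by
  apply le_antisymm
  · apply le_of_forall_gt
    intro C hC
    obtain ⟨C', hC', hCC⟩ := exists_between hC
    refine lt_of_le_of_lt (sInf_le ?_) hCC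
    intro f hf
    rw [hΦ]
    refine iSup₂_le fun t ht => ?_
    have hle : U t * leastC (G t) Ψ < C' :=
      lt_of_le_of_lt (le_iSup₂ (f := fun (t : ℝ) (_ : 0 ≤ t) => U t * leastC (G t) Ψ) t ht) hC'
    by_cases hU : U t = 0
    · simp [hU]
    by_cases hΨ : Ψ f = ∞
    · rw [hΨ, ENNReal.mul_top (pos_of_gt hC').ne']
      exact le_top
    have hL : leastC (G t) Ψ ≠ ∞ := by
      intro h
      rw [h, ENNReal.mul_top hU] at hle
      exact not_top_lt hle
    have hG : G t f ≤ leastC (G t) Ψ * Ψ f := by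
      by_cases h0 : Ψ f = 0
      · obtain ⟨D, hD, -⟩ := sInf_lt_iff.1 (lt_top_iff_ne_top.2 hL)
        have := hD f hf
        simpa [h0] using this
      · rw [← ENNReal.div_le_iff h0 hΨ]
        refine le_sInf fun D hD => ?_
        rw [ENNReal.div_le_iff h0 hΨ]
        exact hD f hf
    calc U t * G t f ≤ U t * (leastC (G t) Ψ * Ψ f) := mul_le_mul_right hG _
      _ = (U t * leastC (G t) Ψ) * Ψ f := (mul_assoc _ _ _).symm
      _ ≤ C' * Ψ f := mul_le_mul_left hle.le _
  · refine iSup₂_le fun t ht => le_sInf fun C hC => ?_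
    have hC2 : ∀ f, Measurable f → U t * G t f ≤ C * Ψ f := by
      intro f hf
      refine le_trans ?_ (hC f hf)
      rw [hΦ]
      exact le_iSup₂ (f := fun (t : ℝ) (_ : 0 ≤ t) => U t * G t f) t ht
    by_cases hCt : C = ∞
    · simp [hCt]
    by_cases hU : U t = 0
    · simp [hU]
    by_cases hUt : U t = ∞
    · have : leastC (G t) Ψ = 0 := by
        refine le_antisymm ?_ (zero_le)
        apply le_of_forall_gt
        intro ε hε
        obtain ⟨δ, hδ, hδε⟩ := exists_between hε
        refine lt_of_le_of_lt (sInf_le ?_) hδε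
        intro f hf
        by_cases hΨ : Ψ f = ∞
        · rw [hΨ, ENNReal.mul_top hδ.ne']
          exact le_top
        · have h := hC2 f hf
          by_cases hg : G t f = 0
          · simp [hg]
          · rw [hUt, ENNReal.top_mul hg] at h
            exact absurd (top_le_iff.1 h) (ENNReal.mul_ne_top hCt hΨ)
      simp [this]
    · rw [mul_comm, ← ENNReal.le_div_iff_mul_le (Or.inl hU) (Or.inl hUt)]
      refine sInf_le fun f hf => ?_
      rw [← ENNReal.mul_div_right_comm, ENNReal.le_div_iff_mul_le (Or.inl hU) (Or.inl hUt),
        mul_comm]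
      exact hC2 f hf

theorem statement10 (p : ℝ) (q : ℝ≥0∞) (hp : 1 ≤ p) (hq : 0 < q)
    (u v w : ℝ → ℝ≥0∞) (k : ℝ → ℝ → ℝ≥0∞)
    (hu : Measurable u) (hv : Measurable v) (hw : Measurable w)
    (hk : Measurable (Function.uncurry k))
    (hk0 : ∀ x y : ℝ, x < y → k x y = 0) :
    leastC (fun f => linfN u (opTg q w k f)) (lpN p v)
      = ⨆ (t : ℝ) (_ : 0 ≤ t),
          Ubar u t * leastC (fun f => lgenN q w (Ht k t f)) (lpN p v) := by
  apply leastC_eq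
  intro f
  rw [linfN_eq u _ fun x y h => opTg_anti q w k f h]
  exact iSup_congr fun t => iSup_congr fun ht => by rw [opTg_eq q hq w k f ht]

end
end

section
/- Let 1 ≤ p < ∞, r = ∞, 0 < q ≤ ∞, let u, v, w ∈ 𝔐⁺ be weights and let k(x,y) ≥ 0 be a Borel kernel on [0,∞)² with k(x,y) = 0 for x < y. Define (Sf)(x) := (∫ₓ^∞ w(y)(∫_y^∞ k(z,y)f(z)dz)^q dy)^{1/q} (with the outer integral replaced by an essential supremum analogously when q = ∞), set U(t) := ess sup_{0≤x≤t} u(x), and (H*_t f)(x) := χ_{[t,∞)}(x)∫ₓ^∞ k(z,x)f(z)dz. Then the least constant C_S such that ‖Sf‖_{L^∞_u} ≤ C_S‖f‖_{L^p_v} for all f ∈ 𝔐⁺ equals sup_{t≥0} U(t)‖H*_t‖_{L^p_v→L^q_w}. -/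
open MeasureTheory Set ENNReal

noncomputable section

/-- The operator `S` with exponent `q ∈ (0,∞]`. -/
def opSg (q : ℝ≥0∞) (w : ℝ → ℝ≥0∞) (k : ℝ → ℝ → ℝ≥0∞) (f : ℝ → ℝ≥0∞) (x : ℝ) : ℝ≥0∞ :=
  if q = ∞ then
    essSup (fun y => w y * intFrom y (fun z => k z y * f z)) (volume.restrict (Ici x))
  else
    (∫⁻ y in Ioi x, w y * (intFrom y (fun z => k z y * f z)) ^ q.toReal) ^ (1/q.toReal)

/-- `(H*_t f)(x) = χ_{[t,∞)}(x) ∫_x^∞ k(z,x) f(z) dz`. -/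
def HsT (k : ℝ → ℝ → ℝ≥0∞) (t : ℝ) (f : ℝ → ℝ≥0∞) (x : ℝ) : ℝ≥0∞ :=
  if t ≤ x then intFrom x (fun z => k z x * f z) else 0

theorem leastC_le_of {Φ Ψ : (ℝ → ℝ≥0∞) → ℝ≥0∞} {R : ℝ≥0∞}
    (h : ∀ f, Measurable f → Ψ f ≠ ∞ → Φ f ≤ R * Ψ f) : R ≠ ∞ → leastC Φ Ψ ≤ R := by
  intro hR
  refine ENNReal.le_of_forall_pos_le_add fun ε hε _ => ?_
  refine sInf_le ?_
  intro f hf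
  by_cases hΨ : Ψ f = ∞
  · rw [hΨ, ENNReal.mul_top]
    · exact le_top
    · have : (0 : ℝ≥0∞) < ε := by exact_mod_cast hε
      exact (lt_of_lt_of_le this le_add_self).ne'
  · exact (h f hf hΨ).trans (by gcongr; exact le_self_add)

theorem le_leastC_mul {Φ Ψ : (ℝ → ℝ≥0∞) → ℝ≥0∞} (h : leastC Φ Ψ ≠ ∞) {f : ℝ → ℝ≥0∞}
    (hf : Measurable f) (hΨ : Ψ f ≠ ∞) : Φ f ≤ leastC Φ Ψ * Ψ f := by
  by_cases h0 : Ψ f = 0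
  · have hne : {C : ℝ≥0∞ | ∀ f : ℝ → ℝ≥0∞, Measurable f → Φ f ≤ C * Ψ f}.Nonempty := by
      by_contra hc
      rw [Set.not_nonempty_iff_eq_empty] at hc
      exact h (by rw [leastC, hc, sInf_empty])
    obtain ⟨C, hC⟩ := hne
    have := hC f hf
    simpa [h0] using this
  · rw [← ENNReal.div_le_iff_le_mul (Or.inl h0) (Or.inl hΨ)]
    refine le_sInf fun C hC => ?_
    rw [ENNReal.div_le_iff_le_mul (Or.inl h0) (Or.inl hΨ)]
    exact hC f hf

theorem opSg_anti (q : ℝ≥0∞) (w : ℝ → ℝ≥0∞) (k : ℝ → ℝ → ℝ≥0∞) (f : ℝ → ℝ≥0∞) :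
    Antitone (opSg q w k f) := by
  intro a b hab
  unfold opSg
  split_ifs
  · exact essSup_mono_measure (Measure.restrict_mono (Ici_subset_Ici.2 hab) le_rfl).absolutelyContinuous
  · gcongr

theorem lgenN_HsT (q : ℝ≥0∞) (hq : 0 < q) (w : ℝ → ℝ≥0∞) (k : ℝ → ℝ → ℝ≥0∞)
    (f : ℝ → ℝ≥0∞) {t : ℝ} (ht : 0 ≤ t) :
    lgenN q w (HsT k t f) = opSg q w k f t := by
  unfold lgenN opSg
  split_ifs with h
  · unfold linfN
    have e : (fun x => w x * HsT k t f x)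
        = (Ici t).indicator (fun y => w y * intFrom y (fun z => k z y * f z)) := by
      funext x
      simp [HsT, Set.indicator_apply]
    rw [e, ENNReal.essSup_indicator_eq_essSup_restrict measurableSet_Ici,
      Measure.restrict_restrict measurableSet_Ici]
    congr 1
    refine Measure.restrict_congr_set ?_
    have h1 : (Ici t ∩ Ioi 0 : Set ℝ) =ᵐ[volume] (Ici t ∩ Ici 0 : Set ℝ) :=
      (Filter.EventuallyEq.refl _ _).inter Ioi_ae_eq_Ici
    rwa [Set.inter_eq_left.2 (Ici_subset_Ici.2 ht)] at h1
  · have hq' : 0 < q.toReal := ENNReal.toReal_pos hq.ne' h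
    unfold lpN
    congr 1
    have e : (fun x => HsT k t f x ^ q.toReal * w x)
        = (Ici t).indicator (fun y => w y * (intFrom y (fun z => k z y * f z)) ^ q.toReal) := by
      funext x
      by_cases hx : t ≤ x <;> simp [HsT, hx, hq', mul_comm]
    rw [e, lintegral_indicator measurableSet_Ici,
      Measure.restrict_restrict measurableSet_Ici]
    congr 1
    refine Measure.restrict_congr_set ?_
    have h1 : (Ici t ∩ Ioi 0 : Set ℝ) =ᵐ[volume] (Ici t ∩ Ici 0 : Set ℝ) :=
      (Filter.EventuallyEq.refl _ _).inter Ioi_ae_eq_Ici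
    rw [Set.inter_eq_left.2 (Ici_subset_Ici.2 ht)] at h1
    exact h1.trans Ioi_ae_eq_Ici.symm

theorem linfN_anti (u : ℝ → ℝ≥0∞) {G : ℝ → ℝ≥0∞} (hG : Antitone G) :
    linfN u G = ⨆ (t : ℝ) (_ : 0 ≤ t), Ubar u t * G t := by
  apply le_antisymm
  · refine essSup_le_of_ae_le _ ?_
    filter_upwards [ae_le_Ubar u, ae_restrict_mem measurableSet_Ioi] with x hx h0
    exact (mul_le_mul_left hx (G x)).trans (le_iSup₂_of_le x (le_of_lt h0) le_rfl)
  · refine iSup₂_le fun t ht => ?_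
    rw [Ubar, mul_comm, ← ENNReal.essSup_const_mul]
    have h1 : volume.restrict (Icc (0:ℝ) t) ≤ volume.restrict (Ioi (0:ℝ)) := by
      rw [← Measure.restrict_congr_set (Ioc_ae_eq_Icc (μ := volume) (a := (0:ℝ)) (b := t))]
      exact Measure.restrict_mono (fun x hx => hx.1) le_rfl
    refine le_trans ?_ (essSup_mono_measure h1.absolutelyContinuous)
    refine essSup_mono_ae ?_
    filter_upwards [ae_restrict_mem measurableSet_Icc] with x hx
    rw [mul_comm]
    exact mul_le_mul_right (hG hx.2) (u x)

theorem statement12 (p : ℝ) (q : ℝ≥0∞) (hp : 1 ≤ p) (hq : 0 < q)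
    (u v w : ℝ → ℝ≥0∞) (k : ℝ → ℝ → ℝ≥0∞)
    (hu : Measurable u) (hv : Measurable v) (hw : Measurable w)
    (hk : Measurable (Function.uncurry k))
    (hk0 : ∀ x y : ℝ, x < y → k x y = 0) :
    leastC (fun f => linfN u (opSg q w k f)) (lpN p v)
      = ⨆ (t : ℝ) (_ : 0 ≤ t),
          Ubar u t * leastC (fun f => lgenN q w (HsT k t f)) (lpN p v) := by
  have hN : ∀ f, linfN u (opSg q w k f)
      = ⨆ (t : ℝ) (_ : 0 ≤ t), Ubar u t * lgenN q w (HsT k t f) := by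
    intro f
    rw [linfN_anti u (opSg_anti q w k f)]
    exact iSup_congr fun t => iSup_congr fun ht => by rw [lgenN_HsT q hq w k f ht]
  apply le_antisymm
  · set R := ⨆ (t : ℝ) (_ : 0 ≤ t),
          Ubar u t * leastC (fun f => lgenN q w (HsT k t f)) (lpN p v) with hR
    by_cases hRt : R = ∞
    · rw [hRt]; exact le_top
    refine leastC_le_of (fun f hf hΨ => ?_) hRt
    simp only [hN]
    refine iSup₂_le fun t ht => ?_
    have hle : Ubar u t * leastC (fun f => lgenN q w (HsT k t f)) (lpN p v) ≤ R :=
      le_iSup₂_of_le t ht le_rfl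
    by_cases hL : leastC (fun f => lgenN q w (HsT k t f)) (lpN p v) = ∞
    · have hU : Ubar u t = 0 := by
        by_contra hU
        rw [hL, ENNReal.mul_top hU] at hle
        exact hRt (top_le_iff.1 hle)
      simp [hU]
    · have h1 := le_leastC_mul hL hf hΨ
      calc Ubar u t * lgenN q w (HsT k t f)
          ≤ Ubar u t * (leastC (fun f => lgenN q w (HsT k t f)) (lpN p v) * lpN p v f) :=
            mul_le_mul_right h1 _
        _ = (Ubar u t * leastC (fun f => lgenN q w (HsT k t f)) (lpN p v)) * lpN p v f :=
            (mul_assoc _ _ _).symm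
        _ ≤ R * lpN p v f := mul_le_mul_left hle _
  · set C := leastC (fun f => linfN u (opSg q w k f)) (lpN p v) with hC
    by_cases hCt : C = ∞
    · rw [hCt]; exact le_top
    refine iSup₂_le fun t ht => ?_
    have h1 : ∀ f, Measurable f → lpN p v f ≠ ∞ →
        Ubar u t * lgenN q w (HsT k t f) ≤ C * lpN p v f := by
      intro f hf hΨ
      have h2 := le_leastC_mul hCt hf hΨ
      refine le_trans ?_ h2
      simp only [hN]
      exact le_iSup₂_of_le t ht le_rfl
    by_cases hU0 : Ubar u t = 0
    · simp [hU0]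
    by_cases hUt : Ubar u t = ∞
    · have h3 : leastC (fun f => lgenN q w (HsT k t f)) (lpN p v) ≤ 0 := by
        refine leastC_le_of (fun f hf hΨ => ?_) ENNReal.zero_ne_top
        have h4 := h1 f hf hΨ
        by_contra h5
        have h6 : lgenN q w (HsT k t f) ≠ 0 := by
          intro h7
          simp [h7] at h5
        rw [hUt, ENNReal.top_mul h6, top_le_iff] at h4
        exact ENNReal.mul_ne_top hCt hΨ h4
      rw [nonpos_iff_eq_zero.1 h3]
      simp
    · have h3 : leastC (fun f => lgenN q w (HsT k t f)) (lpN p v) ≤ C / Ubar u t := by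
        refine leastC_le_of (fun f hf hΨ => ?_) (ENNReal.div_ne_top hCt hU0)
        have h4 := h1 f hf hΨ
        rw [mul_comm, ← ENNReal.le_div_iff_mul_le (Or.inl hU0) (Or.inl hUt)] at h4
        refine h4.trans (le_of_eq ?_)
        simp only [div_eq_mul_inv]
        ring
      exact (mul_le_mul_right h3 _).trans ENNReal.mul_div_le

end
end
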